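/- arXiv:math/0402165 — 2 statements merged into one kernel-verified Lean document; each statement's English description precedes it below -/
import Mathlib

section
/- Let n and m be multiplicatively independent positive integers. If X ⊆ 𝕋 is a nonempty closed subset satisfying ×n(X) ⊆ X and ×m(X) ⊆ X, then either X = 𝕋 or X is finite (and in the latter case X consists of rational points). -/
/-!
The ratios of consecutive products `n ^ i * m ^ j` tend to `1`. Hence multiplying a point very
close to `0`, but different from `0`, by such products comes close to every point of the circle, so
a closed invariant set accumulating at `0` is the whole circle. Translating by a torsion point `d`,
and replacing `n` and `m` by powers which fix `d`, the same is true of a closed invariant set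
accumulating at a torsion point.

It remains to find a torsion point in the set `Y` of accumulation points of an infinite closed
invariant set. Finite invariant sets consist of torsion points. So if `Y` contains none, then every
nonempty closed subset of `Y` that is invariant under powers of `n` and `m` is infinite, whence its
difference set accumulates at `0` and is everything. Take `d` of large order `t` prime to `n * m`,
so that some powers of `n` and `m` fix `d`. As `d` is a difference of points of `Y`, the set
`Y ∩ (Y - d)` is again nonempty, closed and invariant under these powers; iterating, `Y` contains a
translate of the whole group generated by `d`, whose gaps are `1 / t`. So `Y` is dense, hence
contains the torsion point `0` after all.
-/

open Filter Topology Set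
open scoped Pointwise

/-- A set of natural numbers is *nonlacunary* if the consecutive elements of the multiplicative
semigroup it generates have ratios tending to `1`. Here this is phrased as: for every `c > 1`, all
far enough windows `[y, c * y)` meet the semigroup. -/
def IsNonlacunary (S : Set ℕ) : Prop :=
  ∀ c : ℝ, 1 < c → ∀ᶠ y : ℝ in atTop, ∃ s ∈ Submonoid.closure S, (s : ℝ) ∈ Ico y (c * y)

lemma exists_sub_eq_of_mem_addSubgroupClosure {G : Type*} [AddCommGroup G] {A : Set G} {x : G}
    (hx : x ∈ AddSubgroup.closure A) :
    ∃ u ∈ AddSubmonoid.closure A, ∃ v ∈ AddSubmonoid.closure A, v - u = x := by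
  induction hx using AddSubgroup.closure_induction with
  | mem x hx => exact ⟨0, zero_mem _, x, AddSubmonoid.subset_closure hx, sub_zero x⟩
  | zero => exact ⟨0, zero_mem _, 0, zero_mem _, sub_zero 0⟩
  | add x y _ _ hx hy =>
    obtain ⟨u, hu, v, hv, rfl⟩ := hx
    obtain ⟨u', hu', v', hv', rfl⟩ := hy
    exact ⟨u + u', add_mem hu hu', v + v', add_mem hv hv', add_sub_add_comm v v' u u'⟩
  | neg x _ hx =>
    obtain ⟨u, hu, v, hv, rfl⟩ := hx
    exact ⟨v, hv, u, hu, (neg_sub v u).symm⟩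

lemma exists_mem_addSubmonoidClosure_lt_add_of_dense {A : Set ℝ}
    (hA : Dense (AddSubgroup.closure A : Set ℝ)) {a : ℝ} (ha : a ∈ A) (ha0 : 0 < a)
    {δ : ℝ} (hδ : 0 < δ) :
    ∃ u ∈ AddSubmonoid.closure A, ∃ v ∈ AddSubmonoid.closure A, 0 < u ∧ u < v ∧ v < u + δ := by
  obtain ⟨g, hg, hg0, hgδ⟩ := hA.exists_mem_open isOpen_Ioo (nonempty_Ioo.2 hδ)
  obtain ⟨u, hu, v, hv, rfl⟩ := exists_sub_eq_of_mem_addSubgroupClosure hg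
  obtain ⟨k, hk⟩ := exists_nat_gt (-u / a)
  have hka : k • a ∈ AddSubmonoid.closure A := nsmul_mem (AddSubmonoid.subset_closure ha) k
  refine ⟨u + k • a, add_mem hu hka, v + k • a, add_mem hv hka, ?_, by linarith, by linarith⟩
  rw [div_lt_iff₀ ha0] at hk
  rw [nsmul_eq_mul]
  linarith

lemma eventually_exists_mem_Ico_add {M : AddSubmonoid ℝ} {u v : ℝ} (hu : u ∈ M) (hv : v ∈ M)
    (hu0 : 0 < u) (huv : u < v) : ∀ᶠ y in atTop, ∃ x ∈ M, x ∈ Ico y (y + (v - u)) := by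
  -- The sums of `k` terms, each `u` or `v`, run from `k * u` to `k * v` in steps of `v - u`; for
  -- large `k` they reach past `(k + 1) * u`.
  have hg : 0 < v - u := sub_pos.2 huv
  filter_upwards [eventually_ge_atTop (u * (u / (v - u) + 2))] with y hy
  have hy0 : 0 ≤ y := le_trans (by positivity) hy
  set k := ⌊y / u⌋₊
  have hk : k * u ≤ y := (le_div_iff₀ hu0).1 (Nat.floor_le (by positivity))
  have hk' : y / u < k + 1 := Nat.lt_floor_add_one _
  have hr : y - k * u < u := by rw [div_lt_iff₀ hu0] at hk'; linarith
  set j := ⌈(y - k * u) / (v - u)⌉₊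
  have hj : y - k * u ≤ j * (v - u) := (div_le_iff₀ hg).1 (Nat.le_ceil _)
  have hj' : (j : ℝ) < (y - k * u) / (v - u) + 1 :=
    Nat.ceil_lt_add_one (div_nonneg (by linarith) hg.le)
  have hjk : j ≤ k := by
    have : (j : ℝ) < k := calc
      (j : ℝ) < (y - k * u) / (v - u) + 1 := hj'
      _ ≤ u / (v - u) + 1 := by gcongr
      _ ≤ y / u - 1 := by linarith [(le_div_iff₀' hu0).2 hy]
      _ < k := by linarith
    exact_mod_cast this.le
  refine ⟨(k - j) • u + j • v, add_mem (nsmul_mem hu _) (nsmul_mem hv _), ?_⟩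
  have hx : (k - j) • u + j • v = k * u + j * (v - u) := by
    rw [nsmul_eq_mul, nsmul_eq_mul, Nat.cast_sub hjk]
    ring
  have hj'' : (j : ℝ) * (v - u) < y - k * u + (v - u) := by
    rwa [← lt_div_iff₀ hg, add_div, div_self hg.ne']
  rw [hx]
  constructor <;> linarith

lemma one_lt_and_one_lt_of_irrational_log_div_log {n m : ℕ}
    (h : Irrational (Real.log n / Real.log m)) : 1 < n ∧ 1 < m := by
  constructor <;> by_contra! hle
  · interval_cases n <;> simp at h
  · interval_cases m <;> simp at h

lemma isNonlacunary_pair {n m : ℕ} (h : Irrational (Real.log n / Real.log m)) :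
    IsNonlacunary {n, m} := by
  intro c hc
  obtain ⟨hn, hm⟩ := one_lt_and_one_lt_of_irrational_log_div_log h
  obtain ⟨u, hu, v, hv, hu0, huv, hvc⟩ := exists_mem_addSubmonoidClosure_lt_add_of_dense
    (dense_addSubgroupClosure_pair_iff.2 h) (mem_insert _ _)
    (Real.log_pos (Nat.one_lt_cast.2 hn)) (Real.log_pos hc)
  filter_upwards [Real.tendsto_log_atTop.eventually (eventually_exists_mem_Ico_add hu hv hu0 huv),
    eventually_gt_atTop 0] with y ⟨x, hx, hyx, hxy⟩ hy
  obtain ⟨i, j, rfl⟩ := (AddSubmonoid.mem_closure_pair _ _ _).1 hx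
  have hs : i • Real.log n + j • Real.log m = Real.log (n ^ i * m ^ j : ℕ) := by
    push_cast
    rw [Real.log_mul (by positivity) (by positivity), Real.log_pow, Real.log_pow, nsmul_eq_mul,
      nsmul_eq_mul]
  have hs0 : (0 : ℝ) < (n ^ i * m ^ j : ℕ) := by positivity
  refine ⟨n ^ i * m ^ j, (Submonoid.mem_closure_pair _ _ _).2 ⟨i, j, rfl⟩, ?_, ?_⟩
  · rwa [hs, Real.log_le_log_iff hy hs0] at hyx
  · rw [← Real.log_lt_log_iff hs0 (by positivity), Real.log_mul (by positivity) hy.ne', ← hs]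
    linarith

lemma irrational_log_pow_div_log_pow {a b : ℝ} (h : Irrational (Real.log a / Real.log b))
    {e f : ℕ} (he : e ≠ 0) (hf : f ≠ 0) :
    Irrational (Real.log (a ^ e) / Real.log (b ^ f)) := by
  rw [Real.log_pow, Real.log_pow, mul_div_mul_comm]
  have hq : (e / f : ℚ) ≠ 0 := by positivity
  simpa using h.ratCast_mul hq

lemma isNonlacunary_pair_pow {n m : ℕ} (h : Irrational (Real.log n / Real.log m))
    {e f : ℕ} (he : e ≠ 0) (hf : f ≠ 0) : IsNonlacunary {n ^ e, m ^ f} :=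
  isNonlacunary_pair (by exact_mod_cast irrational_log_pow_div_log_pow h he hf)

lemma IsNonlacunary.exists_one_lt {S : Set ℕ} (hS : IsNonlacunary S) :
    ∃ s ∈ Submonoid.closure S, 1 < s := by
  obtain ⟨y, ⟨s, hs, hys, -⟩, hy⟩ := ((hS 2 one_lt_two).and (eventually_gt_atTop 1)).exists
  exact ⟨s, hs, by exact_mod_cast hy.trans_le hys⟩

/-- A closed set that is mapped into itself by multiplication by every element of `S`. -/
structure IsClosedInvariant {G : Type*} [AddMonoid G] [TopologicalSpace G] (S : Set ℕ)
    (X : Set G) : Prop where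
  isClosed : IsClosed X
  mapsTo : ∀ s ∈ S, MapsTo (s • ·) X X

namespace IsClosedInvariant

section AddMonoid

variable {G : Type*} [AddMonoid G] [TopologicalSpace G] {S T : Set ℕ} {X : Set G}

lemma submonoidClosure (hX : IsClosedInvariant S X) :
    IsClosedInvariant (Submonoid.closure S : Set ℕ) X where
  isClosed := hX.isClosed
  mapsTo s hs := by
    induction hs using Submonoid.closure_induction with
    | mem s hs => exact hX.mapsTo s hs
    | one => simp [MapsTo]
    | mul s t _ _ hs ht => intro x hx; simpa only [mul_smul] using hs (ht hx)

lemma of_subset_submonoidClosure (hX : IsClosedInvariant S X)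
    (hT : T ⊆ (Submonoid.closure S : Set ℕ)) : IsClosedInvariant T X :=
  ⟨hX.isClosed, fun t ht ↦ hX.submonoidClosure.mapsTo t (hT ht)⟩

lemma pair_pow {n m : ℕ} (hX : IsClosedInvariant {n, m} X) (e f : ℕ) :
    IsClosedInvariant {n ^ e, m ^ f} X :=
  hX.of_subset_submonoidClosure <| pair_subset
    (pow_mem (Submonoid.subset_closure (by simp)) e)
    (pow_mem (Submonoid.subset_closure (by simp)) f)

end AddMonoid

section AddCommGroup

variable {G : Type*} [AddCommGroup G] [TopologicalSpace G] {S : Set ℕ} {X : Set G}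

lemma preimage_add_right [ContinuousAdd G] (hX : IsClosedInvariant S X) {d : G}
    (hd : ∀ s ∈ S, s • d = d) : IsClosedInvariant S ((· + d) ⁻¹' X) where
  isClosed := hX.isClosed.preimage (by fun_prop)
  mapsTo s hs x hx := by
    simpa only [mem_preimage, smul_add, hd s hs] using hX.mapsTo s hs hx

protected lemma inter {Y : Set G} (hX : IsClosedInvariant S X) (hY : IsClosedInvariant S Y) :
    IsClosedInvariant S (X ∩ Y) :=
  ⟨hX.isClosed.inter hY.isClosed, fun s hs ↦ (hX.mapsTo s hs).inter_inter (hY.mapsTo s hs)⟩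

lemma sub_self [IsTopologicalAddGroup G] [T2Space G] [CompactSpace G]
    (hX : IsClosedInvariant S X) : IsClosedInvariant S (X - X) where
  isClosed := by
    rw [sub_eq_add_neg]
    exact (hX.isClosed.isCompact.add hX.isClosed.isCompact.neg).isClosed
  mapsTo s hs := by
    rintro _ ⟨x, hx, y, hy, rfl⟩
    exact ⟨s • x, hX.mapsTo s hs hx, s • y, hX.mapsTo s hs hy, (smul_sub s x y).symm⟩

end AddCommGroup

end IsClosedInvariant

lemma isOfFinAddOrder_of_finite_of_mapsTo {G : Type*} [AddLeftCancelMonoid G] {X : Set G}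
    (hX : X.Finite) {n : ℕ} (hn : 1 < n) (hmaps : MapsTo (n • ·) X X) {x : G} (hx : x ∈ X) :
    IsOfFinAddOrder x := by
  by_contra hx'
  have hinj : Function.Injective fun k : ℕ ↦ n ^ k • x :=
    (injective_nsmul_iff_not_isOfFinAddOrder.2 hx').comp (Nat.pow_right_injective hn)
  refine infinite_range_of_injective hinj (hX.subset ?_)
  rintro _ ⟨k, rfl⟩
  simpa only [← smul_iterate_apply] using hmaps.iterate k hx

lemma IsClosedInvariant.isOfFinAddOrder_of_finite {G : Type*} [AddLeftCancelMonoid G]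
    [TopologicalSpace G] {S : Set ℕ} (hS : IsNonlacunary S) {X : Set G}
    (hX : IsClosedInvariant S X) (hfin : X.Finite) {x : G} (hx : x ∈ X) : IsOfFinAddOrder x :=
  have ⟨s, hs, hs1⟩ := hS.exists_one_lt
  isOfFinAddOrder_of_finite_of_mapsTo hfin hs1 (hX.submonoidClosure.mapsTo s hs) hx

lemma exists_pow_nsmul_pow_nsmul_eq {G : Type*} [AddLeftCancelMonoid G] {x : G}
    (hx : IsOfFinAddOrder x) (n : ℕ) : ∃ a e : ℕ, e ≠ 0 ∧ n ^ e • n ^ a • x = n ^ a • x := by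
  have hmem (k : ℕ) : n ^ k • x ∈ (AddSubmonoid.multiples x : Set G) := ⟨n ^ k, rfl⟩
  obtain ⟨a, b, hab, h⟩ := (finite_multiples.2 hx).exists_lt_map_eq_of_forall_mem hmem
  refine ⟨a, b - a, by omega, ?_⟩
  rw [smul_smul, ← pow_add, Nat.sub_add_cancel hab.le, h]

lemma pow_totient_nsmul_eq_self {G : Type*} [AddLeftCancelMonoid G] {n : ℕ} {x : G}
    (h : n.Coprime (addOrderOf x)) : n ^ (addOrderOf x).totient • x = x := by
  simpa using nsmul_eq_nsmul_iff_modEq.2 (Nat.ModEq.pow_totient h)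

lemma tendsto_nsmul_nhdsNE {G : Type*} [AddCommGroup G] [TopologicalSpace G] [ContinuousAdd G]
    [T1Space G] {n : ℕ} (hn : {x : G | n • x = 0}.Finite) (x : G) :
    Tendsto (n • ·) (𝓝[≠] x) (𝓝[≠] (n • x)) := by
  have hfiber : {y : G | n • y = n • x}.Finite := by
    refine (hn.preimage (f := (· - x)) (sub_left_injective.injOn)).subset fun y hy ↦ ?_
    simpa [smul_sub, sub_eq_zero] using hy
  refine tendsto_nhdsWithin_iff.2 ⟨(continuous_nsmul n).continuousAt.continuousWithinAt, ?_⟩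
  exact nhdsNE_le_cofinite x hfiber.compl_mem_cofinite

protected lemma IsClosedInvariant.derivedSet {G : Type*} [AddCommGroup G] [TopologicalSpace G]
    [ContinuousAdd G] [T1Space G] {S : Set ℕ} {X : Set G} (hX : IsClosedInvariant S X)
    (hS : ∀ s ∈ S, {x : G | s • x = 0}.Finite) : IsClosedInvariant S (derivedSet X) where
  isClosed := isClosed_derivedSet X
  mapsTo s hs x hx := by
    rw [mem_derivedSet, accPt_iff_frequently_nhdsNE] at hx ⊢
    exact (tendsto_nsmul_nhdsNE (hS s hs) x).frequently (hx.mono fun y hy ↦ hX.mapsTo s hs hy)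

lemma accPt_zero_preimage_add_right {G : Type*} [AddGroup G] [TopologicalSpace G]
    [ContinuousAdd G] {X : Set G} {a : G} (h : AccPt a (𝓟 X)) :
    AccPt 0 (𝓟 ((· + a) ⁻¹' X)) := by
  rw [← comap_principal]
  exact (isOpenMap_add_right a).accPt_comap (by rwa [zero_add])

section AddCircle

variable {p : ℝ}

lemma IsClosedInvariant.derivedSet_pair {n m : ℕ} (h : Irrational (Real.log n / Real.log m))
    {X : Set (AddCircle p)} (hX : IsClosedInvariant {n, m} X) :
    IsClosedInvariant {n, m} (derivedSet X) := by
  obtain ⟨hn, hm⟩ := one_lt_and_one_lt_of_irrational_log_div_log h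
  refine hX.derivedSet ?_
  rintro s (rfl | rfl)
  · exact AddCircle.finite_torsion p (zero_lt_one.trans hn)
  · exact AddCircle.finite_torsion p (zero_lt_one.trans hm)

variable [hp : Fact (0 < p)]

lemma IsNonlacunary.eventually_nhdsGT_dist_nsmul_lt {S : Set ℕ} (hS : IsNonlacunary S)
    (y : AddCircle p) {ε : ℝ} (hε : 0 < ε) :
    ∀ᶠ u : ℝ in 𝓝[>] 0, ∃ s ∈ Submonoid.closure S, dist (s • (u : AddCircle p)) y < ε := by
  obtain ⟨v, ⟨hv, -⟩, rfl⟩ := y.eq_coe_Ioc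
  have hc : 1 < 1 + ε / v := lt_add_of_pos_right 1 (by positivity)
  have hlim : Tendsto (fun u : ℝ ↦ v * u⁻¹) (𝓝[>] 0) atTop :=
    tendsto_inv_nhdsGT_zero.const_mul_atTop hv
  filter_upwards [hlim.eventually (hS _ hc), self_mem_nhdsWithin] with u ⟨s, hs, hvs, hsv⟩ hu
  rw [← div_eq_mul_inv, div_le_iff₀ hu] at hvs
  have hsv : s * u < v + ε := by
    rwa [← mul_assoc, ← div_eq_mul_inv, lt_div_iff₀ hu, one_add_mul, div_mul_cancel₀ _ hv.ne']
      at hsv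
  refine ⟨s, hs, ?_⟩
  calc dist (s • (u : AddCircle p)) v = ‖((s * u - v : ℝ) : AddCircle p)‖ := by
        rw [dist_eq_norm, AddCircle.coe_sub, ← nsmul_eq_mul, AddCircle.coe_nsmul]
    _ ≤ |s * u - v| := QuotientAddGroup.norm_mk_le_norm
    _ < ε := abs_sub_lt_iff.2 ⟨by linarith, by linarith⟩

lemma IsNonlacunary.eventually_nhdsNE_dist_nsmul_lt {S : Set ℕ} (hS : IsNonlacunary S)
    (y : AddCircle p) {ε : ℝ} (hε : 0 < ε) :
    ∀ᶠ u : ℝ in 𝓝[≠] 0, ∃ s ∈ Submonoid.closure S, dist (s • (u : AddCircle p)) y < ε := by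
  rw [← nhdsLT_sup_nhdsGT, eventually_sup]
  refine ⟨?_, hS.eventually_nhdsGT_dist_nsmul_lt y hε⟩
  have hneg : Tendsto Neg.neg (𝓝[<] (0 : ℝ)) (𝓝[>] 0) := by
    simpa using tendsto_neg_nhdsLT (a := (0 : ℝ))
  filter_upwards [hneg.eventually (hS.eventually_nhdsGT_dist_nsmul_lt (-y) hε)] with u ⟨s, hs, h⟩
  refine ⟨s, hs, ?_⟩
  rwa [AddCircle.coe_neg, smul_neg, dist_neg_neg] at h

lemma IsClosedInvariant.eq_univ_of_accPt_zero {S : Set ℕ} (hS : IsNonlacunary S)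
    {X : Set (AddCircle p)} (hX : IsClosedInvariant S X) (h0 : AccPt 0 (𝓟 X)) : X = univ := by
  have hlift : AccPt 0 (𝓟 ((↑) ⁻¹' X : Set ℝ)) := by
    rw [← comap_principal]
    exact QuotientAddGroup.isOpenMap_coe.accPt_comap h0
  refine eq_univ_of_forall fun y ↦ hX.isClosed.closure_subset (Metric.mem_closure_iff.2 ?_)
  intro ε hε
  obtain ⟨u, hu, s, hs, hlt⟩ := ((accPt_iff_frequently_nhdsNE.1 hlift).and_eventually
    (hS.eventually_nhdsNE_dist_nsmul_lt y hε)).exists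
  exact ⟨_, hX.submonoidClosure.mapsTo s hs hu, by rwa [dist_comm]⟩

lemma IsClosedInvariant.eq_univ_of_accPt_of_isOfFinAddOrder {n m : ℕ}
    (h : Irrational (Real.log n / Real.log m)) {X : Set (AddCircle p)}
    (hX : IsClosedInvariant {n, m} X) {r : AddCircle p} (hr : AccPt r (𝓟 X))
    (hrfin : IsOfFinAddOrder r) : X = univ := by
  obtain ⟨a, e, he, hn⟩ := exists_pow_nsmul_pow_nsmul_eq hrfin n
  obtain ⟨b, f, hf, hm⟩ := exists_pow_nsmul_pow_nsmul_eq (hrfin.nsmul (n := n ^ a)) m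
  set d := m ^ b • n ^ a • r
  have hX' := (hX.derivedSet_pair h).pair_pow a b
  have hd : AccPt d (𝓟 X) := hX'.mapsTo _ (by simp) (hX'.mapsTo _ (by simp) hr)
  have hfix : ∀ s ∈ ({n ^ e, m ^ f} : Set ℕ), s • d = d := by
    rintro s (rfl | rfl)
    · rw [smul_comm, hn]
    · exact hm
  have hshift : (· + d) ⁻¹' X = univ :=
    ((hX.pair_pow e f).preimage_add_right hfix).eq_univ_of_accPt_zero
      (isNonlacunary_pair_pow h he hf) (accPt_zero_preimage_add_right hd)
  exact ((Equiv.addRight d).surjective.preimage_injective).eq_iff.1 hshift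

namespace IsClosedInvariant

variable {S : Set ℕ} {X : Set (AddCircle p)}

lemma sub_self_eq_univ (hS : IsNonlacunary S) (hX : IsClosedInvariant S X) (hinf : X.Infinite) :
    X - X = univ := by
  obtain ⟨y, hy⟩ := hinf.exists_accPt_principal
  have hyX : y ∈ X := (isClosed_iff_derivedSet_subset X).1 hX.isClosed hy
  have hsub : (· + y) ⁻¹' X ⊆ X - X := fun x hx ↦ ⟨x + y, hx, y, hyX, add_sub_cancel_right x y⟩
  exact hX.sub_self.eq_univ_of_accPt_zero hS
    ((accPt_zero_preimage_add_right hy).mono (principal_mono.2 hsub))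

lemma exists_forall_add_nsmul_mem (hS : IsNonlacunary S) (hX : IsClosedInvariant S X)
    (hne : X.Nonempty) (hord : ∀ x ∈ X, ¬IsOfFinAddOrder x) {d : AddCircle p}
    (hd : ∀ s ∈ S, s • d = d) (k : ℕ) : ∃ x, ∀ j ≤ k, x + j • d ∈ X := by
  induction k generalizing X with
  | zero => exact ⟨hne.some, by simpa using hne.some_mem⟩
  | succ k ih =>
    have hinf : X.Infinite := fun hfin ↦
      hord _ hne.some_mem (hX.isOfFinAddOrder_of_finite hS hfin hne.some_mem)
    have hne' : (X ∩ (· + d) ⁻¹' X).Nonempty := by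
      obtain ⟨x, hx, y, hy, rfl⟩ := (hX.sub_self_eq_univ hS hinf).ge (mem_univ d)
      exact ⟨y, hy, by simpa using hx⟩
    obtain ⟨x, hx⟩ :=
      ih (hX.inter (hX.preimage_add_right hd)) hne' fun y hy ↦ hord y hy.1
    refine ⟨x, fun j hj ↦ ?_⟩
    cases j with
    | zero => exact (hx 0 k.zero_le).1
    | succ j => simpa [succ_nsmul, add_assoc] using (hx j (Nat.le_of_succ_le_succ hj)).2

end IsClosedInvariant

lemma exists_norm_sub_nsmul_period_div_le (y : AddCircle p) {t : ℕ} (ht : 0 < t) :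
    ∃ j ≤ t, ‖y - j • ((p / t : ℝ) : AddCircle p)‖ ≤ p / t := by
  obtain ⟨v, ⟨hv0, hvp⟩, rfl⟩ := y.eq_coe_Ico
  have hδ : 0 < p / t := div_pos hp.out (Nat.cast_pos.2 ht)
  set j := ⌊v / (p / t)⌋₊
  have hj : j * (p / t) ≤ v := (le_div_iff₀ hδ).1 (Nat.floor_le (by positivity))
  have hj' : v < (j + 1) * (p / t) := (div_lt_iff₀ hδ).1 (Nat.lt_floor_add_one _)
  refine ⟨j, Nat.floor_le_of_le ?_, ?_⟩
  · rw [div_le_iff₀ hδ, mul_div_cancel₀ _ (by positivity)]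
    exact hvp.le
  · rw [← AddCircle.coe_nsmul, ← AddCircle.coe_sub, nsmul_eq_mul]
    refine QuotientAddGroup.norm_mk_le_norm.trans (abs_le.2 ⟨?_, ?_⟩) <;> linarith

namespace IsClosedInvariant

variable {n m : ℕ} {X : Set (AddCircle p)}

lemma exists_dist_le_period_div (h : Irrational (Real.log n / Real.log m))
    (hX : IsClosedInvariant {n, m} X) (hne : X.Nonempty) (hord : ∀ x ∈ X, ¬IsOfFinAddOrder x)
    {t : ℕ} (ht : 0 < t) (hnt : n.Coprime t) (hmt : m.Coprime t) (y : AddCircle p) :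
    ∃ x ∈ X, dist y x ≤ p / t := by
  set d : AddCircle p := ((p / t : ℝ) : AddCircle p)
  have hdt : addOrderOf d = t := AddCircle.addOrderOf_period_div ht
  have hφ : t.totient ≠ 0 := (Nat.totient_pos.2 ht).ne'
  have hfix : ∀ s ∈ ({n ^ t.totient, m ^ t.totient} : Set ℕ), s • d = d := by
    rw [← hdt] at hnt hmt ⊢
    rintro s (rfl | rfl)
    exacts [pow_totient_nsmul_eq_self hnt, pow_totient_nsmul_eq_self hmt]
  obtain ⟨x, hx⟩ := (hX.pair_pow _ _).exists_forall_add_nsmul_mem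
    (isNonlacunary_pair_pow h hφ hφ) hne hord hfix t
  obtain ⟨j, hj, hdist⟩ := exists_norm_sub_nsmul_period_div_le (y - x) ht
  exact ⟨x + j • d, hx j hj, by rwa [dist_eq_norm, ← sub_sub]⟩

lemma exists_isOfFinAddOrder (h : Irrational (Real.log n / Real.log m))
    (hX : IsClosedInvariant {n, m} X) (hne : X.Nonempty) : ∃ x ∈ X, IsOfFinAddOrder x := by
  by_contra! hord
  refine hord 0 (hX.isClosed.closure_subset (Metric.mem_closure_iff.2 fun ε hε ↦ ?_)) .zero
  obtain ⟨N, hN⟩ := exists_nat_gt (p / ε)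
  obtain ⟨hn, hm⟩ := one_lt_and_one_lt_of_irrational_log_div_log h
  set t := n * m * N + 1
  have hNt : N ≤ t := Nat.le_succ_of_le (Nat.le_mul_of_pos_left N (by positivity))
  have htε : p / t < ε := by
    rw [div_lt_comm₀ (by positivity) hε]
    exact hN.trans_le (Nat.cast_le.2 hNt)
  obtain ⟨x, hx, hdist⟩ := hX.exists_dist_le_period_div h hne hord (Nat.succ_pos _)
    (t := t) (by simp [t, mul_assoc]) (by simp [t, mul_assoc, mul_left_comm n m]) 0
  exact ⟨x, hx, hdist.trans_lt htε⟩

end IsClosedInvariant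

theorem furstenberg_times_n_times_m_closed_invariant_sets_general {n m : ℕ}
    (h : Irrational (Real.log n / Real.log m)) {X : Set (AddCircle p)} (hX : IsClosed X)
    (hXn : MapsTo (n • ·) X X) (hXm : MapsTo (m • ·) X X) :
    X = univ ∨ (X.Finite ∧ ∀ x ∈ X, ∃ q : ℚ, x = ((q * p : ℝ) : AddCircle p)) := by
  have hinv : IsClosedInvariant {n, m} X := ⟨hX, by simpa using ⟨hXn, hXm⟩⟩
  rcases X.finite_or_infinite with hfin | hinf
  · refine .inr ⟨hfin, fun x hx ↦ ?_⟩
    obtain ⟨k, -, -, hk⟩ := AddCircle.exists_gcd_eq_one_of_isOfFinAddOrder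
      (hinv.isOfFinAddOrder_of_finite (isNonlacunary_pair h) hfin hx)
    exact ⟨k / addOrderOf x, by simp [hk]⟩
  · obtain ⟨r, hr, hrfin⟩ :=
      (hinv.derivedSet_pair h).exists_isOfFinAddOrder h hinf.exists_accPt_principal
    exact .inl (hinv.eq_univ_of_accPt_of_isOfFinAddOrder h hr hrfin)

end AddCircle

/-- Furstenberg: Let `n` and `m` be multiplicatively independent positive
integers.  If `X ⊆ 𝕋` is a nonempty closed subset with `×n(X) ⊆ X` and `×m(X) ⊆ X`, then
either `X = 𝕋` or `X` is finite, and in the latter case `X` consists of rational points. -/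
theorem furstenberg_times_n_times_m_closed_invariant_sets
    (n m : ℕ) (hn : 0 < n) (hm : 0 < m)
    (hindep : Irrational (Real.log n / Real.log m))
    (X : Set UnitAddCircle) (hX : X.Nonempty) (hXclosed : IsClosed X)
    (hXn : (fun x : UnitAddCircle => n • x) '' X ⊆ X)
    (hXm : (fun x : UnitAddCircle => m • x) '' X ⊆ X) :
    X = Set.univ ∨ (X.Finite ∧ ∀ x ∈ X, ∃ q : ℚ, x = ((q : ℝ) : UnitAddCircle)) := by
  simpa only [mul_one] using furstenberg_times_n_times_m_closed_invariant_sets_general hindep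
    hXclosed (mapsTo_iff_image_subset.2 hXn) (mapsTo_iff_image_subset.2 hXm)
end

section
/- Let m and n be relatively prime integers, each at least 2, and let μ be a Borel probability measure on 𝕋 that is invariant and ergodic under the multiplicative semigroup of maps generated by ×n and ×m. If the measure-theoretic entropy h_μ(×n) of the single transformation ×n is positive, then μ is Lebesgue measure on 𝕋. -/
open MeasureTheory ENNReal

section Entropy

variable {α : Type*} [MeasurableSpace α]

/-- `P : Fin m → Set α` is a finite measurable partition of `α` modulo `μ`-null sets. -/
def IsFinMeasPartition (μ : Measure α) {m : ℕ} (P : Fin m → Set α) : Prop :=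
  (∀ i, MeasurableSet (P i)) ∧ Pairwise (Function.onFun Disjoint P) ∧ μ (⋃ i, P i)ᶜ = 0

/-- Shannon entropy (information) of a finite family of sets with respect to `μ`. -/
noncomputable def finPartitionEntropy (μ : Measure α) {ι : Type*} [Fintype ι]
    (P : ι → Set α) : ℝ≥0∞ :=
  ENNReal.ofReal (∑ i, Real.negMulLog ((μ (P i)).toReal))

/-- The common refinement `P ∨ T⁻¹ P ∨ ⋯ ∨ T^{-(n-1)} P`, indexed by `Fin n → Fin m`. -/
def refinedPartition (T : α → α) {m : ℕ} (P : Fin m → Set α) (n : ℕ) :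
    (Fin n → Fin m) → Set α :=
  fun f => ⋂ i : Fin n, T^[(i : ℕ)] ⁻¹' P (f i)

/-- The measure-theoretic (Kolmogorov–Sinai) entropy `h_μ(T)` of a transformation `T`
preserving `μ`, defined as the supremum over all finite measurable partitions `P` of
`inf_n H_μ(P ∨ T⁻¹P ∨ ⋯ ∨ T^{-n}P)/(n+1)` (by subadditivity this infimum equals the
usual limit). -/
noncomputable def ksEntropy (T : α → α) (μ : Measure α) : ℝ≥0∞ :=
  ⨆ (m : ℕ) (P : Fin m → Set α) (_ : IsFinMeasPartition μ P),
    ⨅ n : ℕ, finPartitionEntropy μ (refinedPartition T P (n + 1)) / (n + 1 : ℝ≥0∞)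

end Entropy

open MeasureTheory

/-!
The proof follows Host. Let `ν_N` be the sum of the translates of `μ` by the `n ^ N`-torsion points
of the circle. For a `×n`-invariant `μ`, the density `φ_N` of `μ` with respect to `ν_N` is the
product along the `×n`-orbit of the conditional probability `φ_1 x` of `x` given `n • x`, so it
decreases to a limit `φ x`. The set `{φ ≠ 0}` is almost invariant under both `×n` and `×m`, the
latter because `×m` permutes the `n ^ N`-torsion points; hence it is null or conull.

If `φ = 0` almost everywhere, then `μ` becomes singular to `ν_N` as `N → ∞`. Replace `m` by a power
`b ≡ 1 [MOD n ^ 2]`, and average `fourier l` over the first `n ^ N` steps of its `×b`-orbit. By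
lifting the exponent, at most `O(n ^ N)` of the `n ^ (2 * N)` differences `l * (b ^ i - b ^ j)` with
`i, j < n ^ N` are divisible by `n ^ N`, and only these contribute to the norm of the average in
`L² (ν_N)`, which is therefore bounded uniformly in `N`. Its norm in `L² (μ)` then tends to `0`,
while its `μ`-integral is the Fourier coefficient of `μ` at `l`. So every nontrivial coefficient
of `μ` vanishes.

If `φ ≠ 0` almost everywhere, then `φ ≤ φ ∘ ×n` is an almost everywhere equality by invariance of
`μ`, so `φ_1 = 1` almost everywhere, that is, `×n` is injective on a conull set. The base `n` digit
of a point is then a function of its future digits, so by Fano's inequality the entropy of `×n`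
vanishes, contrary to the hypothesis.
-/

open Filter Topology

section NumberTheory

theorem emultiplicity_pow_sub_one {p : ℕ} (hp : p.Prime) {b : ℤ} (hpb : (p : ℤ) ∣ b - 1)
    (h4 : p = 2 → 4 ∣ b - 1) (k : ℕ) :
    emultiplicity (p : ℤ) (b ^ k - 1) = emultiplicity (p : ℤ) ((b - 1) * k) := by
  have hpZ : Prime (p : ℤ) := Nat.prime_iff_prime_int.mp hp
  have hnb : ¬ (p : ℤ) ∣ b := fun hb ↦ hpZ.not_dvd_one (by simpa using dvd_sub hb hpb)
  rw [emultiplicity_mul hpZ]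
  rcases hp.eq_two_or_odd' with rfl | hodd
  · simpa using Int.two_pow_sub_pow' (x := b) (y := 1) k (h4 rfl) (by simpa using hnb)
  · simpa [← Int.natCast_emultiplicity] using Int.emultiplicity_pow_sub_pow hp hodd hpb hnb k

theorem isCoprime_of_forall_prime_dvd_sub_one {q : ℕ} {b : ℤ}
    (hb : ∀ p : ℕ, p.Prime → p ∣ q → (p : ℤ) ∣ b - 1) : IsCoprime (q : ℤ) b := by
  refine Int.isCoprime_iff_gcd_eq_one.mpr (Nat.coprime_of_dvd fun p hp hpq hpb ↦ ?_)
  have hdvd : (p : ℤ) ∣ 1 := by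
    simpa using dvd_sub (Int.natCast_dvd.mpr hpb) (hb p hp (by simpa using hpq))
  exact (Nat.prime_iff_prime_int.mp hp).not_dvd_one hdvd

theorem dvd_mul_pow_sub_one_iff {q : ℕ} {b : ℤ}
    (hb : ∀ p : ℕ, p.Prime → p ∣ q → (p : ℤ) ∣ b - 1) (h4 : 2 ∣ q → 4 ∣ b - 1) (l : ℤ) (k : ℕ) :
    (q : ℤ) ∣ l * (b ^ k - 1) ↔ (q : ℤ) ∣ l * ((b - 1) * k) := by
  rw [Int.natCast_dvd, Int.natCast_dvd, Nat.dvd_iff_prime_pow_dvd_dvd,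
    Nat.dvd_iff_prime_pow_dvd_dvd]
  refine forall₄_congr fun p j hp hpj ↦ ?_
  rcases eq_or_ne j 0 with rfl | hj
  · simp
  have hpq : p ∣ q := (dvd_pow_self p hj).trans hpj
  have hmult := emultiplicity_pow_sub_one hp (hb p hp hpq) (fun h2 ↦ h4 (h2 ▸ hpq)) k
  have hpZ : Prime (p : ℤ) := Nat.prime_iff_prime_int.mp hp
  rw [← Int.natCast_dvd, ← Int.natCast_dvd, Nat.cast_pow, pow_dvd_iff_le_emultiplicity,
    pow_dvd_iff_le_emultiplicity, emultiplicity_mul hpZ, emultiplicity_mul hpZ, hmult]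

theorem dvd_mul_pow_sub_pow_iff {q : ℕ} {b : ℤ}
    (hb : ∀ p : ℕ, p.Prime → p ∣ q → (p : ℤ) ∣ b - 1) (h4 : 2 ∣ q → 4 ∣ b - 1) (l : ℤ) (i j : ℕ) :
    (q : ℤ) ∣ l * (b ^ i - b ^ j) ↔ (q : ℤ) ∣ l * (b - 1) * (i - j) := by
  wlog hij : j ≤ i generalizing i j
  · rw [← neg_sub, mul_neg, dvd_neg, this j i (by lia), ← neg_sub (i : ℤ), mul_neg, dvd_neg]
  obtain ⟨k, rfl⟩ := Nat.exists_eq_add_of_le hij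
  have hcop : IsCoprime (q : ℤ) (b ^ j) := (isCoprime_of_forall_prime_dvd_sub_one hb).pow_right
  have hfactor : l * (b ^ (j + k) - b ^ j) = b ^ j * (l * (b ^ k - 1)) := by ring
  have hcancel : (q : ℤ) ∣ b ^ j * (l * (b ^ k - 1)) ↔ (q : ℤ) ∣ l * (b ^ k - 1) :=
    ⟨hcop.dvd_of_dvd_mul_left, fun h ↦ h.mul_left _⟩
  rw [hfactor, hcancel, dvd_mul_pow_sub_one_iff hb h4, mul_assoc]
  simp

theorem card_filter_dvd_mul_sub_le (L : ℕ) {d : ℤ} (hd : d ≠ 0) (j : ℤ) :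
    {i ∈ Finset.range L | (L : ℤ) ∣ d * ((i : ℕ) - j)}.card ≤ d.natAbs := by
  rcases eq_or_ne L 0 with rfl | hL
  · simp
  have : NeZero L := ⟨hL⟩
  refine le_trans (Finset.card_le_card_of_injOn (fun i ↦ (i : ZMod L) - j) (fun i hi ↦ ?_) ?_)
    (IsAddCyclic.card_nsmul_eq_zero_le (α := ZMod L) (Int.natAbs_pos.mpr hd))
  · have hzero : ((d * (i - j) : ℤ) : ZMod L) = 0 :=
      (ZMod.intCast_zmod_eq_zero_iff_dvd _ L).mpr (Finset.mem_filter.mp hi).2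
    have hsmul : d • ((i : ZMod L) - j) = 0 := by simpa using hzero
    simpa [-natCast_zsmul] using natAbs_nsmul_eq_zero.mpr hsmul
  · intro i hi i' hi' heq
    have hmod : (i : ZMod L) = i' := sub_left_injective heq
    simp only [Finset.coe_filter, Finset.mem_range, Set.mem_ofPred_eq] at hi hi'
    rwa [ZMod.natCast_eq_natCast_iff', Nat.mod_eq_of_lt hi.1, Nat.mod_eq_of_lt hi'.1] at hmod

end NumberTheory

section Fourier

theorem fourier_nsmul {T : ℝ} (l : ℤ) (n : ℕ) (x : AddCircle T) :
    (fourier l (n • x) : ℂ) = fourier (n * l) x := by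
  rw [fourier_apply, fourier_apply, ← natCast_zsmul, smul_smul, mul_comm]

theorem integral_fourier_nsmul {T : ℝ} (μ : Measure (AddCircle T)) (l : ℤ) (n : ℕ) :
    ∫ x, (fourier l x : ℂ) ∂μ.map (fun x ↦ n • x) = ∫ x, (fourier (n * l) x : ℂ) ∂μ := by
  rw [integral_map (continuous_nsmul n).aemeasurable
    (fourier l).continuous.aestronglyMeasurable]
  simp only [fourier_nsmul]

theorem integrable_continuousMap {X E : Type*} [TopologicalSpace X] [CompactSpace X]
    [MeasurableSpace X] [OpensMeasurableSpace X] [NormedAddCommGroup E]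
    (μ : Measure X) [IsFiniteMeasure μ] (f : C(X, E)) : Integrable f μ :=
  f.continuous.integrable_of_hasCompactSupport (HasCompactSupport.of_compactSpace f)

theorem integral_fourier_map_add_right {T : ℝ} (μ : Measure (AddCircle T)) (a : AddCircle T)
    (l : ℤ) :
    ∫ x, (fourier l x : ℂ) ∂μ.map (· + a) = fourier l a * ∫ x, (fourier l x : ℂ) ∂μ := by
  rw [integral_map (measurable_add_const a).aemeasurable
    (fourier l).continuous.aestronglyMeasurable, ← integral_const_mul]
  simp only [fourier_apply, smul_add, AddCircle.toCircle_add, Circle.coe_mul, mul_comm]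

theorem integral_fourier_eq_zero_of_map_add_right {T : ℝ} {μ : Measure (AddCircle T)}
    {a : AddCircle T} (hμ : μ.map (· + a) = μ) {l : ℤ} (hl : (fourier l a : ℂ) ≠ 1) :
    ∫ x, (fourier l x : ℂ) ∂μ = 0 := by
  by_contra hne
  exact hl ((mul_eq_right₀ hne).mp (by rw [← integral_fourier_map_add_right, hμ]))

theorem integral_fourier_volume {T : ℝ} [Fact (0 < T)] {l : ℤ} (hl : l ≠ 0) :
    ∫ x : AddCircle T, (fourier l x : ℂ) = 0 := by
  refine integral_fourier_eq_zero_of_map_add_right (a := (T / 2 / l : ℝ))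
    (map_add_right_eq_self _ _) fun h ↦ ?_
  have hneg := fourier_add_half_inv_index hl (Fact.out : 0 < T) 0
  rw [zero_add, h, fourier_eval_zero] at hneg
  norm_num at hneg

variable {T : ℝ} [Fact (0 < T)] {μ ν : Measure (AddCircle T)} [IsFiniteMeasure μ]
  [IsFiniteMeasure ν]

theorem integral_eq_of_mem_span_fourier
    (h : ∀ l : ℤ, ∫ x, (fourier l x : ℂ) ∂μ = ∫ x, (fourier l x : ℂ) ∂ν)
    {f : C(AddCircle T, ℂ)} (hf : f ∈ Submodule.span ℂ (Set.range (@fourier T))) :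
    ∫ x, f x ∂μ = ∫ x, f x ∂ν := by
  induction hf using Submodule.span_induction with
  | mem f hf => obtain ⟨l, rfl⟩ := hf; exact h l
  | zero => simp
  | add f g _ _ hf hg =>
    simp only [ContinuousMap.add_apply]
    rw [integral_add (integrable_continuousMap μ f) (integrable_continuousMap μ g),
      integral_add (integrable_continuousMap ν f) (integrable_continuousMap ν g), hf, hg]
  | smul a f _ hf => simp only [ContinuousMap.smul_apply, integral_smul, hf]

theorem ext_of_integral_fourier_eq
    (h : ∀ l : ℤ, ∫ x, (fourier l x : ℂ) ∂μ = ∫ x, (fourier l x : ℂ) ∂ν) : μ = ν := by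
  refine ext_of_forall_mem_subalgebra_integral_eq_of_polish (𝕜 := ℂ)
    (A := fourierSubalgebra.comap (BoundedContinuousFunction.toContinuousMapStarₐ ℂ)) ?_ ?_
  · intro x y hxy
    obtain ⟨_, ⟨f, hf, rfl⟩, hfxy⟩ := fourierSubalgebra_separatesPoints hxy
    exact ⟨f, ⟨f, ⟨BoundedContinuousFunction.mkOfCompact f, hf, rfl⟩, rfl⟩, hfxy⟩
  · intro f hf
    refine integral_eq_of_mem_span_fourier (f := f.toContinuousMap) h ?_
    rw [← fourierSubalgebra_coe]
    exact hf

end Fourier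

theorem map_withDensity_comp {α β : Type*} [MeasurableSpace α] [MeasurableSpace β]
    (ν : Measure α) {T : α → β} (hT : Measurable T) {φ : β → ℝ≥0∞} (hφ : Measurable φ) :
    (ν.withDensity (φ ∘ T)).map T = (ν.map T).withDensity φ := by
  ext s hs
  rw [Measure.map_apply hT hs, withDensity_apply _ (hT hs), withDensity_apply _ hs,
    setLIntegral_map hs hφ hT]
  rfl

theorem map_add_right_withDensity_comp_nsmul {G : Type*} [AddCommMonoid G] [MeasurableSpace G]
    [MeasurableAdd G] [MeasurableConstSMul ℕ G] {n : ℕ} {ν : Measure G} {a : G} (ha : n • a = 0)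
    (hν : ν.map (· + a) = ν) {φ : G → ℝ≥0∞} (hφ : Measurable φ) :
    (ν.withDensity fun x ↦ φ (n • x)).map (· + a) = ν.withDensity fun x ↦ φ (n • x) := by
  have hψ : Measurable fun x : G ↦ φ (n • x) := by fun_prop
  have hcomp : (fun x : G ↦ φ (n • x)) = (fun x ↦ φ (n • x)) ∘ (· + a) := by
    ext x; simp [smul_add, ha]
  conv_lhs => rw [hcomp]
  rw [map_withDensity_comp ν (measurable_add_const a) hψ, hν]

section RotationSum

/-- The sum of the translates of a measure `μ` by the `n`-torsion points `j / n` of the circle.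
When `μ` is `×n`-invariant, this is `n` times the measure obtained by averaging `μ` over the
fibres of `×n`. -/
noncomputable def rotationSum (n : ℕ) [NeZero n] (μ : Measure UnitAddCircle) :
    Measure UnitAddCircle :=
  ∑ j : ZMod n, μ.map (· + ZMod.toAddCircle j)

variable {n : ℕ} [NeZero n] {μ : Measure UnitAddCircle}

theorem le_rotationSum : μ ≤ rotationSum n μ := by
  intro s
  calc μ s = μ.map (· + ZMod.toAddCircle (0 : ZMod n)) s := by simp
    _ ≤ rotationSum n μ s := by
      rw [rotationSum, Measure.finsetSum_apply]
      exact Finset.single_le_sum (f := fun j : ZMod n ↦ μ.map (· + ZMod.toAddCircle j) s)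
        (fun _ _ ↦ zero_le) (Finset.mem_univ 0)

instance [IsFiniteMeasure μ] : IsFiniteMeasure (rotationSum n μ) := by
  unfold rotationSum; infer_instance

@[simp]
theorem rotationSum_one : rotationSum 1 μ = μ := by
  rw [rotationSum, Fintype.sum_subsingleton _ 0]
  simp

theorem fourier_toAddCircle (l : ℤ) (j : ZMod n) :
    (fourier l (ZMod.toAddCircle j) : ℂ) = ZMod.stdAddChar (j * (l : ZMod n)) := by
  rw [fourier_apply, ← map_zsmul, zsmul_eq_mul, mul_comm]
  rfl

theorem exists_toAddCircle_eq {a : UnitAddCircle} (ha : n • a = 0) :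
    ∃ j : ZMod n, ZMod.toAddCircle j = a := by
  obtain ⟨k, -, hk⟩ := (AddCircle.nsmul_eq_zero_iff (NeZero.pos n)).mp ha
  exact ⟨k, by rw [ZMod.toAddCircle_natCast, ← hk, mul_one]⟩

theorem integral_fourier_rotationSum [IsFiniteMeasure μ] (l : ℤ) :
    ∫ x, (fourier l x : ℂ) ∂rotationSum n μ =
      if (n : ℤ) ∣ l then n * ∫ x, (fourier l x : ℂ) ∂μ else 0 := by
  have hsum : ∑ j : ZMod n, (fourier l (ZMod.toAddCircle j) : ℂ) =
      if (n : ℤ) ∣ l then (n : ℂ) else 0 := by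
    simp only [fourier_toAddCircle, AddChar.sum_mulShift _ (ZMod.isPrimitive_stdAddChar n),
      ZMod.card, ZMod.intCast_zmod_eq_zero_iff_dvd, Nat.cast_ite, Nat.cast_zero]
  rw [rotationSum, integral_finsetSum_measure fun j _ ↦ integrable_continuousMap _ _]
  simp only [integral_fourier_map_add_right]
  rw [← Finset.sum_mul, hsum, ite_mul, zero_mul]

theorem norm_integral_fourier_rotationSum_le [IsProbabilityMeasure μ] (l : ℤ) :
    ‖∫ x, (fourier l x : ℂ) ∂rotationSum n μ‖ ≤ if (n : ℤ) ∣ l then (n : ℝ) else 0 := by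
  have hle : ‖∫ x, (fourier l x : ℂ) ∂μ‖ ≤ 1 := by
    simpa using norm_integral_le_of_norm_le_const (μ := μ) (C := 1)
      (.of_forall fun x ↦ (Circle.norm_coe (AddCircle.toCircle (l • x))).le)
  rw [integral_fourier_rotationSum]
  split_ifs
  · simpa using mul_le_of_le_one_right n.cast_nonneg hle
  · simp

theorem map_add_right_rotationSum [IsFiniteMeasure μ] {a : UnitAddCircle} (ha : n • a = 0) :
    (rotationSum n μ).map (· + a) = rotationSum n μ := by
  refine ext_of_integral_fourier_eq fun l ↦ ?_
  rw [integral_fourier_map_add_right]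
  by_cases hl : (n : ℤ) ∣ l
  · obtain ⟨k, rfl⟩ := hl
    rw [← fourier_nsmul, ha, fourier_eval_zero, one_mul]
  · rw [integral_fourier_rotationSum, if_neg hl, mul_zero]

theorem map_nsmul_rotationSum_of_coprime [IsFiniteMeasure μ] {m : ℕ} (hmn : m.Coprime n) :
    (rotationSum n μ).map (fun x ↦ m • x) = rotationSum n (μ.map fun x ↦ m • x) := by
  have hdvd (l : ℤ) : (n : ℤ) ∣ m * l ↔ (n : ℤ) ∣ l :=
    ⟨(Nat.isCoprime_iff_coprime.mpr hmn).symm.dvd_of_dvd_mul_left, fun h ↦ h.mul_left _⟩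
  refine ext_of_integral_fourier_eq fun l ↦ ?_
  simp only [integral_fourier_nsmul, integral_fourier_rotationSum, hdvd]

theorem map_nsmul_rotationSum_mul [IsFiniteMeasure μ] {L : ℕ} [NeZero L] :
    (rotationSum (L * n) μ).map (fun x ↦ n • x) =
      (n : ℝ≥0∞) • rotationSum L (μ.map fun x ↦ n • x) := by
  have hdvd (l : ℤ) : ((L * n : ℕ) : ℤ) ∣ n * l ↔ (L : ℤ) ∣ l := by
    rw [mul_comm, Nat.cast_mul, mul_dvd_mul_iff_left (by exact_mod_cast NeZero.ne n)]
  have : IsFiniteMeasure ((n : ℝ≥0∞) • rotationSum L (μ.map fun x ↦ n • x)) :=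
    Measure.smul_finite _ (by simp)
  refine ext_of_integral_fourier_eq fun l ↦ ?_
  simp only [integral_smul_measure, integral_fourier_nsmul, integral_fourier_rotationSum, hdvd]
  split_ifs <;> simp [mul_assoc, mul_left_comm]

theorem ext_of_map_nsmul_eq {ν ν' : Measure UnitAddCircle} [IsFiniteMeasure ν]
    [IsFiniteMeasure ν']
    (hν : ∀ a : UnitAddCircle, n • a = 0 → ν.map (· + a) = ν)
    (hν' : ∀ a : UnitAddCircle, n • a = 0 → ν'.map (· + a) = ν')
    (hmap : ν.map (fun x ↦ n • x) = ν'.map fun x ↦ n • x) : ν = ν' := by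
  refine ext_of_integral_fourier_eq fun l ↦ ?_
  by_cases hl : (n : ℤ) ∣ l
  · obtain ⟨k, rfl⟩ := hl
    rw [← integral_fourier_nsmul, hmap, integral_fourier_nsmul]
  · have htorsion : n • (ZMod.toAddCircle (1 : ZMod n)) = 0 := by rw [← map_nsmul]; simp
    have hne : (fourier l (ZMod.toAddCircle (1 : ZMod n)) : ℂ) ≠ 1 := by
      rw [fourier_toAddCircle, one_mul, ← AddChar.map_zero_eq_one (ZMod.stdAddChar (N := n)),
        ZMod.injective_stdAddChar.ne_iff]
      rwa [Ne, ZMod.intCast_zmod_eq_zero_iff_dvd]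
    rw [integral_fourier_eq_zero_of_map_add_right (hν _ htorsion) hne,
      integral_fourier_eq_zero_of_map_add_right (hν' _ htorsion) hne]

theorem withDensity_comp_nsmul_rotationSum [IsFiniteMeasure μ] {L : ℕ} [NeZero L]
    (hμ : μ.map (fun x ↦ n • x) = μ) {φ : UnitAddCircle → ℝ≥0∞} (hφ : Measurable φ)
    (hL : (rotationSum L μ).withDensity φ = μ) :
    (rotationSum (L * n) μ).withDensity (fun x ↦ φ (n • x)) = rotationSum n μ := by
  have hT : Measurable fun x : UnitAddCircle ↦ n • x := measurable_const_smul n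
  have hmap : ((rotationSum (L * n) μ).withDensity fun x ↦ φ (n • x)).map (fun x ↦ n • x) =
      (rotationSum n μ).map fun x ↦ n • x := by
    refine (map_withDensity_comp _ hT hφ).trans ?_
    rw [map_nsmul_rotationSum_mul, hμ, withDensity_smul_measure, hL]
    simpa [hμ] using (map_nsmul_rotationSum_mul (μ := μ) (n := n) (L := 1)).symm
  have : IsFiniteMeasure ((rotationSum (L * n) μ).withDensity fun x ↦ φ (n • x)) := by
    have : IsFiniteMeasure
        (((rotationSum (L * n) μ).withDensity fun x ↦ φ (n • x)).map fun x ↦ n • x) := by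
      rw [hmap]; infer_instance
    exact Measure.isFiniteMeasure_of_map hT.aemeasurable
  refine ext_of_map_nsmul_eq (fun a ha ↦ ?_) (fun a ha ↦ map_add_right_rotationSum ha) hmap
  refine map_add_right_withDensity_comp_nsmul ha (map_add_right_rotationSum ?_) hφ
  rw [mul_smul, ha, smul_zero]

end RotationSum

section Singularity

variable {α : Type*} [MeasurableSpace α]

theorem lintegral_le_measure_add_mul_lintegral {μ ν : Measure α} {φ u : α → ℝ≥0∞}
    (hφ : Measurable φ) (hμ : μ ≤ ν.withDensity φ) (hu : Measurable u) (hu1 : ∀ x, u x ≤ 1)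
    (ε : ℝ≥0∞) : ∫⁻ x, u x ∂μ ≤ μ {x | ε < φ x} + ε * ∫⁻ x, u x ∂ν := by
  have hs : MeasurableSet {x | ε < φ x} := measurableSet_lt measurable_const hφ
  rw [← lintegral_add_compl _ hs]
  gcongr
  · calc ∫⁻ x in {x | ε < φ x}, u x ∂μ ≤ ∫⁻ _ in {x | ε < φ x}, 1 ∂μ := lintegral_mono hu1
      _ = μ {x | ε < φ x} := by simp
  · calc ∫⁻ x in {x | ε < φ x}ᶜ, u x ∂μ
        ≤ ∫⁻ x in {x | ε < φ x}ᶜ, u x ∂ν.withDensity φ :=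
          lintegral_mono' (Measure.restrict_mono le_rfl hμ) le_rfl
      _ = ∫⁻ x in {x | ε < φ x}ᶜ, φ x * u x ∂ν :=
          setLIntegral_withDensity_eq_setLIntegral_mul _ hφ hu hs.compl
      _ ≤ ∫⁻ x in {x | ε < φ x}ᶜ, ε * u x ∂ν :=
          setLIntegral_mono' hs.compl fun x hx ↦ mul_le_mul_left (not_lt.mp (by exact hx)) _
      _ ≤ ∫⁻ x, ε * u x ∂ν := setLIntegral_le_lintegral _ _
      _ = ε * ∫⁻ x, u x ∂ν := lintegral_const_mul _ hu

theorem tendsto_lintegral_zero_of_le_withDensity {μ : Measure α} [IsFiniteMeasure μ]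
    {ν : ℕ → Measure α} {φ u : ℕ → α → ℝ≥0∞} (hφ : ∀ N, Measurable (φ N))
    (hμ : ∀ N, μ ≤ (ν N).withDensity (φ N)) (hlim : ∀ᵐ x ∂μ, Tendsto (φ · x) atTop (𝓝 0))
    (hu : ∀ N, Measurable (u N)) (hu1 : ∀ N x, u N x ≤ 1) {C : ℝ≥0∞} (hC : C ≠ ∞)
    (hbound : ∀ N, ∫⁻ x, u N x ∂ν N ≤ C) :
    Tendsto (fun N ↦ ∫⁻ x, u N x ∂μ) atTop (𝓝 0) := by
  refine ENNReal.tendsto_nhds_zero.mpr fun δ hδ ↦ ?_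
  have hδ2 : 0 < δ / 2 := ENNReal.half_pos hδ.ne'
  have hε : 0 < δ / 2 / C := ENNReal.div_pos hδ2.ne' hC
  have hmeasure : Tendsto (fun N ↦ μ {x | δ / 2 / C < φ N x}) atTop (𝓝 (μ ∅)) := by
    refine tendsto_measure_of_ae_tendsto_indicator_of_isFiniteMeasure atTop MeasurableSet.empty
      (fun N ↦ measurableSet_lt measurable_const (hφ N)) ?_
    filter_upwards [hlim] with x hx
    filter_upwards [hx.eventually_lt_const hε] with N hN
    simp [hN.le]
  rw [measure_empty] at hmeasure
  filter_upwards [ENNReal.tendsto_nhds_zero.mp hmeasure _ hδ2] with N hN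
  calc ∫⁻ x, u N x ∂μ
      ≤ μ {x | δ / 2 / C < φ N x} + δ / 2 / C * ∫⁻ x, u N x ∂ν N :=
        lintegral_le_measure_add_mul_lintegral (hφ N) (hμ N) (hu N) (hu1 N) _
    _ ≤ δ / 2 + C * (δ / 2 / C) := by rw [mul_comm C]; gcongr; exact hbound N
    _ ≤ δ / 2 + δ / 2 := by gcongr; exact ENNReal.mul_div_le
    _ = δ := ENNReal.add_halves δ

end Singularity

section HostAverage

/-- The average of the first `L` functions of the orbit of the character `fourier l` under
composition with `×b`, whose `L²`-norms measure how far `μ` is from Lebesgue measure in Host's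
argument. -/
noncomputable def fourierOrbitAverage (l : ℤ) (b L : ℕ) : C(UnitAddCircle, ℂ) :=
  (L : ℂ)⁻¹ • ∑ i ∈ Finset.range L, fourier (l * b ^ i)

theorem norm_fourierOrbitAverage_le_one (l : ℤ) (b L : ℕ) (x : UnitAddCircle) :
    ‖fourierOrbitAverage l b L x‖ ≤ 1 := by
  have hsum : ‖∑ i ∈ Finset.range L, (fourier (l * b ^ i) x : ℂ)‖ ≤ L := by
    simpa using norm_sum_le_of_le (Finset.range L) fun i _ ↦
      (Circle.norm_coe (AddCircle.toCircle ((l * b ^ i) • x))).le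
  simpa [fourierOrbitAverage] using inv_mul_le_one_of_le₀ hsum L.cast_nonneg

theorem integral_fourier_mul_pow {μ : Measure UnitAddCircle} {b : ℕ}
    (hμ : μ.map (fun x ↦ b • x) = μ) (l : ℤ) (i : ℕ) :
    ∫ x, (fourier (l * b ^ i) x : ℂ) ∂μ = ∫ x, (fourier l x : ℂ) ∂μ := by
  induction i with
  | zero => simp only [pow_zero, mul_one]
  | succ i ih =>
    rw [← ih, pow_succ', mul_left_comm, ← integral_fourier_nsmul, hμ]

theorem integral_fourierOrbitAverage {μ : Measure UnitAddCircle} [IsFiniteMeasure μ] {b : ℕ}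
    (hμ : μ.map (fun x ↦ b • x) = μ) (l : ℤ) {L : ℕ} (hL : L ≠ 0) :
    ∫ x, fourierOrbitAverage l b L x ∂μ = ∫ x, (fourier l x : ℂ) ∂μ := by
  simp only [fourierOrbitAverage, ContinuousMap.smul_apply, ContinuousMap.sum_apply,
    integral_smul]
  rw [integral_finsetSum _ fun i _ ↦ integrable_continuousMap μ _]
  simp only [integral_fourier_mul_pow hμ, Finset.sum_const, Finset.card_range]
  simp [hL]

theorem norm_sum_fourier_sq (l : ℤ) (b L : ℕ) (x : UnitAddCircle) :
    ((‖∑ i ∈ Finset.range L, (fourier (l * b ^ i) x : ℂ)‖ ^ 2 : ℝ) : ℂ) =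
      ∑ j ∈ Finset.range L, ∑ i ∈ Finset.range L, (fourier (l * (b ^ i - b ^ j)) x : ℂ) := by
  rw [Complex.ofReal_pow, ← Complex.mul_conj', map_sum, Finset.sum_mul_sum, Finset.sum_comm]
  refine Finset.sum_congr rfl fun j _ ↦ Finset.sum_congr rfl fun i _ ↦ ?_
  rw [mul_sub, sub_eq_add_neg, fourier_add, fourier_neg]

theorem integral_norm_sum_fourier_sq_le {μ : Measure UnitAddCircle} [IsProbabilityMeasure μ]
    {L : ℕ} [NeZero L] {b : ℕ} (hb : ∀ p : ℕ, p.Prime → p ∣ L → (p : ℤ) ∣ b - 1)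
    (h4 : 2 ∣ L → (4 : ℤ) ∣ b - 1) (hb1 : b ≠ 1) {l : ℤ} (hl : l ≠ 0) :
    ∫ x, ‖∑ i ∈ Finset.range L, (fourier (l * b ^ i) x : ℂ)‖ ^ 2 ∂rotationSum L μ ≤
      L ^ 2 * (l * (b - 1)).natAbs := by
  have hd : l * (b - 1) ≠ 0 := mul_ne_zero hl (sub_ne_zero_of_ne (by exact_mod_cast hb1))
  have hexpand : ((∫ x, ‖∑ i ∈ Finset.range L, (fourier (l * b ^ i) x : ℂ)‖ ^ 2
      ∂rotationSum L μ : ℝ) : ℂ) = ∑ j ∈ Finset.range L, ∑ i ∈ Finset.range L,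
        ∫ x, (fourier (l * (b ^ i - b ^ j)) x : ℂ) ∂rotationSum L μ := by
    rw [← integral_complex_ofReal]
    simp only [norm_sum_fourier_sq]
    rw [integral_finsetSum _ fun j _ ↦ integrable_finsetSum _ fun i _ ↦
      integrable_continuousMap _ _]
    exact Finset.sum_congr rfl fun j _ ↦
      integral_finsetSum _ fun i _ ↦ integrable_continuousMap _ _
  have hrow (j : ℕ) : ∑ i ∈ Finset.range L,
      ‖∫ x, (fourier (l * (b ^ i - b ^ j)) x : ℂ) ∂rotationSum L μ‖ ≤
        L * (l * (b - 1)).natAbs := by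
    calc _ ≤ ∑ i ∈ Finset.range L, if (L : ℤ) ∣ l * (b - 1) * (i - j) then (L : ℝ) else 0 := by
          simp only [← dvd_mul_pow_sub_pow_iff hb h4]
          exact Finset.sum_le_sum fun i _ ↦ norm_integral_fourier_rotationSum_le _
      _ ≤ L * (l * (b - 1)).natAbs := by
          rw [← Finset.sum_filter, Finset.sum_const, nsmul_eq_mul, mul_comm]
          gcongr
          exact card_filter_dvd_mul_sub_le L hd j
  rw [← Real.norm_of_nonneg (integral_nonneg fun x ↦ sq_nonneg _), ← Complex.norm_real, hexpand]
  calc _ ≤ ∑ _ ∈ Finset.range L, (L * (l * (b - 1)).natAbs : ℝ) :=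
        (norm_sum_le _ _).trans
          (Finset.sum_le_sum fun _ _ ↦ (norm_sum_le _ _).trans (hrow _))
    _ = L ^ 2 * (l * (b - 1)).natAbs := by
        rw [Finset.sum_const, Finset.card_range, nsmul_eq_mul]; ring

theorem integral_norm_fourierOrbitAverage_sq_le {μ : Measure UnitAddCircle}
    [IsProbabilityMeasure μ] {L : ℕ} [NeZero L] {b : ℕ}
    (hb : ∀ p : ℕ, p.Prime → p ∣ L → (p : ℤ) ∣ b - 1) (h4 : 2 ∣ L → (4 : ℤ) ∣ b - 1)
    (hb1 : b ≠ 1) {l : ℤ} (hl : l ≠ 0) :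
    ∫ x, ‖fourierOrbitAverage l b L x‖ ^ 2 ∂rotationSum L μ ≤ (l * (b - 1)).natAbs := by
  have hL : (0 : ℝ) < L ^ 2 := by have := NeZero.pos L; positivity
  have hscale (x : UnitAddCircle) : ‖fourierOrbitAverage l b L x‖ ^ 2 =
      (L ^ 2 : ℝ)⁻¹ * ‖∑ i ∈ Finset.range L, (fourier (l * b ^ i) x : ℂ)‖ ^ 2 := by
    simp [fourierOrbitAverage, mul_pow, -fourier_apply]
  simp only [hscale, integral_const_mul]
  exact (inv_mul_le_iff₀ hL).mpr (integral_norm_sum_fourier_sq_le hb h4 hb1 hl)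

theorem norm_integral_sq_le_integral_norm_sq {α E : Type*} [MeasurableSpace α]
    [NormedAddCommGroup E] [NormedSpace ℝ E] [CompleteSpace E] {μ : Measure α}
    [IsProbabilityMeasure μ] {f : α → E} (hf : Integrable f μ)
    (hf2 : Integrable (fun x ↦ ‖f x‖ ^ 2) μ) : ‖∫ x, f x ∂μ‖ ^ 2 ≤ ∫ x, ‖f x‖ ^ 2 ∂μ :=
  ConvexOn.map_integral_le (g := fun z ↦ ‖z‖ ^ 2)
    (convexOn_univ_norm.pow (fun _ _ ↦ norm_nonneg _) 2) (by fun_prop) isClosed_univ (by simp)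
    hf hf2

theorem integral_fourier_eq_zero_of_tendsto_density {μ : Measure UnitAddCircle}
    [IsProbabilityMeasure μ] {n b : ℕ} [NeZero n]
    (hb : ∀ p : ℕ, p.Prime → p ∣ n → (p : ℤ) ∣ b - 1) (h4 : 2 ∣ n → (4 : ℤ) ∣ b - 1)
    (hb1 : b ≠ 1) (hμb : μ.map (fun x ↦ b • x) = μ) {φ : ℕ → UnitAddCircle → ℝ≥0∞}
    (hφ : ∀ N, Measurable (φ N)) (hμ : ∀ N, μ ≤ (rotationSum (n ^ N) μ).withDensity (φ N))
    (hlim : ∀ᵐ x ∂μ, Tendsto (φ · x) atTop (𝓝 0)) {l : ℤ} (hl : l ≠ 0) :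
    ∫ x, (fourier l x : ℂ) ∂μ = 0 := by
  set s : ℕ → C(UnitAddCircle, ℂ) := fun N ↦ fourierOrbitAverage l b (n ^ N)
  have hs2 (ν : Measure UnitAddCircle) [IsFiniteMeasure ν] (N : ℕ) :
      Integrable (fun x ↦ ‖s N x‖ ^ 2) ν :=
    integrable_continuousMap ν ⟨fun x ↦ ‖s N x‖ ^ 2, by fun_prop⟩
  have hlintegral (ν : Measure UnitAddCircle) [IsFiniteMeasure ν] (N : ℕ) :
      ∫⁻ x, ENNReal.ofReal (‖s N x‖ ^ 2) ∂ν = ENNReal.ofReal (∫ x, ‖s N x‖ ^ 2 ∂ν) :=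
    (ofReal_integral_eq_lintegral_ofReal (hs2 ν N) (.of_forall fun _ ↦ sq_nonneg _)).symm
  have hbound (N : ℕ) : ∫⁻ x, ENNReal.ofReal (‖s N x‖ ^ 2) ∂rotationSum (n ^ N) μ ≤
      ENNReal.ofReal (l * (b - 1)).natAbs := by
    rw [hlintegral]
    exact ENNReal.ofReal_le_ofReal <| integral_norm_fourierOrbitAverage_sq_le
      (fun p hp hpn ↦ hb p hp (hp.dvd_of_dvd_pow hpn))
      (fun h2 ↦ h4 (Nat.prime_two.dvd_of_dvd_pow h2)) hb1 hl
  have htendsto : Tendsto (fun N ↦ ∫⁻ x, ENNReal.ofReal (‖s N x‖ ^ 2) ∂μ) atTop (𝓝 0) := by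
    refine tendsto_lintegral_zero_of_le_withDensity hφ hμ hlim (fun N ↦ by fun_prop)
      (fun N x ↦ ?_) ENNReal.ofReal_ne_top hbound
    exact ENNReal.ofReal_le_one.mpr
      (pow_le_one₀ (norm_nonneg _) (norm_fourierOrbitAverage_le_one _ _ _ _))
  have hle (N : ℕ) : ENNReal.ofReal (‖∫ x, (fourier l x : ℂ) ∂μ‖ ^ 2) ≤
      ∫⁻ x, ENNReal.ofReal (‖s N x‖ ^ 2) ∂μ := by
    rw [hlintegral, ← integral_fourierOrbitAverage hμb l (NeZero.ne (n ^ N))]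
    exact ENNReal.ofReal_le_ofReal
      (norm_integral_sq_le_integral_norm_sq (integrable_continuousMap μ _) (hs2 μ N))
  have hzero := ge_of_tendsto' htendsto hle
  simpa using hzero

theorem exists_pow_ne_one_dvd_pow_sub_one {m n : ℕ} (hm : 2 ≤ m) (hn : n ≠ 0) (hmn : m.Coprime n) :
    ∃ k, m ^ k ≠ 1 ∧ (n : ℤ) ∣ (m ^ k : ℕ) - 1 := by
  refine ⟨n.totient, (Nat.one_lt_pow (Nat.totient_pos.mpr (by lia)).ne' hm).ne', ?_⟩
  simpa using (Nat.modEq_iff_dvd.mp (Nat.ModEq.pow_totient hmn).symm)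

theorem map_pow_nsmul {M : Type*} [AddMonoid M] [MeasurableSpace M] [MeasurableConstSMul ℕ M]
    {μ : Measure M} {m : ℕ} (hμ : μ.map (fun x ↦ m • x) = μ)
    (k : ℕ) : μ.map (fun x ↦ m ^ k • x) = μ := by
  have hpres : MeasurePreserving (fun x : M ↦ m • x) μ μ :=
    ⟨measurable_const_smul m, hμ⟩
  have hiter := (hpres.iterate k).map_eq
  rwa [smul_iterate] at hiter

theorem eq_volume_of_tendsto_density {μ : Measure UnitAddCircle} [IsProbabilityMeasure μ]
    {m n : ℕ} [NeZero n] (hm : 2 ≤ m) (hmn : m.Coprime n)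
    (hμm : μ.map (fun x ↦ m • x) = μ) {φ : ℕ → UnitAddCircle → ℝ≥0∞}
    (hφ : ∀ N, Measurable (φ N)) (hμ : ∀ N, μ ≤ (rotationSum (n ^ N) μ).withDensity (φ N))
    (hlim : ∀ᵐ x ∂μ, Tendsto (φ · x) atTop (𝓝 0)) : μ = volume := by
  obtain ⟨k, hk1, hk⟩ :=
    exists_pow_ne_one_dvd_pow_sub_one hm (pow_ne_zero 2 (NeZero.ne n)) (hmn.pow_right 2)
  have hdvd {q : ℕ} (hq : q ∣ n ^ 2) : (q : ℤ) ∣ (m ^ k : ℕ) - 1 :=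
    (Int.natCast_dvd_natCast.mpr hq).trans hk
  refine ext_of_integral_fourier_eq fun l ↦ ?_
  rcases eq_or_ne l 0 with rfl | hl
  · simp [measureReal_def]
  rw [integral_fourier_volume hl]
  exact integral_fourier_eq_zero_of_tendsto_density (fun p _ hpn ↦ hdvd (dvd_pow hpn two_ne_zero))
    (fun h2 ↦ hdvd (q := 4) (pow_dvd_pow_of_dvd h2 2)) hk1 (map_pow_nsmul hμm k) hφ hμ hlim hl

end HostAverage

section FiberDensity

variable (n : ℕ) [NeZero n] (μ : Measure UnitAddCircle)

/-- The Radon–Nikodym density of `μ` with respect to `rotationSum n μ`, truncated at its almost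
sure bound `1`. For a `×n`-invariant `μ` it is the conditional probability of `x` given `n • x`. -/
noncomputable def fiberDensity (x : UnitAddCircle) : ℝ≥0∞ :=
  min (μ.rnDeriv (rotationSum n μ) x) 1

/-- The multiplicative cocycle generated by `fiberDensity` over `×n`. For a `×n`-invariant `μ` it
is the density of `μ` with respect to `rotationSum (n ^ N) μ`. -/
noncomputable def fiberDensityProd (N : ℕ) (x : UnitAddCircle) : ℝ≥0∞ :=
  ∏ i ∈ Finset.range N, fiberDensity n μ (n ^ i • x)

/-- The decreasing limit of the densities `fiberDensityProd`. -/
noncomputable def fiberDensityLim (x : UnitAddCircle) : ℝ≥0∞ :=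
  ⨅ N, fiberDensityProd n μ N x

variable {n μ}

theorem fiberDensity_le_one (x : UnitAddCircle) : fiberDensity n μ x ≤ 1 := min_le_right _ _

theorem measurable_fiberDensity : Measurable (fiberDensity n μ) :=
  (Measure.measurable_rnDeriv _ _).min measurable_const

theorem measurable_fiberDensityProd (N : ℕ) : Measurable (fiberDensityProd n μ N) :=
  Finset.measurable_fun_prod _ fun i _ ↦
    measurable_fiberDensity.comp (measurable_const_smul (n ^ i))

theorem measurable_fiberDensityLim : Measurable (fiberDensityLim n μ) :=
  .iInf measurable_fiberDensityProd

theorem fiberDensityProd_succ (N : ℕ) (x : UnitAddCircle) :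
    fiberDensityProd n μ (N + 1) x = fiberDensityProd n μ N (n • x) * fiberDensity n μ x := by
  simp only [fiberDensityProd, Finset.prod_range_succ', pow_zero, one_smul, pow_succ, mul_smul]

theorem antitone_fiberDensityProd (x : UnitAddCircle) :
    Antitone fun N ↦ fiberDensityProd n μ N x :=
  antitone_nat_of_succ_le fun N ↦ by
    simpa only [fiberDensityProd, Finset.prod_range_succ] using
      mul_le_of_le_one_right' (fiberDensity_le_one _)

theorem tendsto_fiberDensityProd (x : UnitAddCircle) :
    Tendsto (fun N ↦ fiberDensityProd n μ N x) atTop (𝓝 (fiberDensityLim n μ x)) :=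
  tendsto_atTop_iInf (antitone_fiberDensityProd x)

theorem fiberDensityLim_le_one (x : UnitAddCircle) : fiberDensityLim n μ x ≤ 1 :=
  iInf_le_of_le 0 (by simp [fiberDensityProd])

theorem fiberDensityLim_nsmul_mul (x : UnitAddCircle) :
    fiberDensityLim n μ (n • x) * fiberDensity n μ x = fiberDensityLim n μ x := by
  have hfin : fiberDensity n μ x ≠ ∞ := ((fiberDensity_le_one x).trans_lt one_lt_top).ne
  have hmul : Tendsto (fun N ↦ fiberDensityProd n μ (N + 1) x) atTop
      (𝓝 (fiberDensityLim n μ (n • x) * fiberDensity n μ x)) := by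
    simp only [fiberDensityProd_succ]
    exact ENNReal.Tendsto.mul_const (tendsto_fiberDensityProd _) (.inr hfin)
  exact tendsto_nhds_unique hmul ((tendsto_fiberDensityProd x).comp (tendsto_add_atTop_nat 1))

theorem fiberDensityLim_le_nsmul (x : UnitAddCircle) :
    fiberDensityLim n μ x ≤ fiberDensityLim n μ (n • x) := by
  rw [← fiberDensityLim_nsmul_mul]
  exact mul_le_of_le_one_right' (fiberDensity_le_one x)

variable [IsFiniteMeasure μ]

theorem withDensity_fiberDensity : (rotationSum n μ).withDensity (fiberDensity n μ) = μ := by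
  have hac : μ ≪ rotationSum n μ := Measure.absolutelyContinuous_of_le le_rotationSum
  have hrn : fiberDensity n μ =ᵐ[rotationSum n μ] μ.rnDeriv (rotationSum n μ) := by
    filter_upwards [Measure.rnDeriv_le_one_of_le le_rotationSum] with x hx using min_eq_left hx
  have := Measure.haveLebesgueDecomposition_of_sigmaFinite μ (rotationSum n μ)
  rw [withDensity_congr_ae hrn, Measure.withDensity_rnDeriv_eq _ _ hac]

theorem withDensity_fiberDensityProd (hμ : μ.map (fun x ↦ n • x) = μ) (N : ℕ) :
    (rotationSum (n ^ N) μ).withDensity (fiberDensityProd n μ N) = μ := by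
  induction N with
  | zero =>
    have hone : fiberDensityProd n μ 0 = 1 := funext fun x ↦ Finset.prod_range_zero _
    simp only [pow_zero, rotationSum_one, hone, withDensity_one]
  | succ N ih =>
    have hmeas := measurable_fiberDensityProd (n := n) (μ := μ) N
    have hsucc : fiberDensityProd n μ (N + 1) =
        (fun x ↦ fiberDensityProd n μ N (n • x)) * fiberDensity n μ :=
      funext (fiberDensityProd_succ N)
    calc (rotationSum (n ^ N * n) μ).withDensity (fiberDensityProd n μ (N + 1))
        = ((rotationSum (n ^ N * n) μ).withDensity fun x ↦
            fiberDensityProd n μ N (n • x)).withDensity (fiberDensity n μ) := by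
          rw [hsucc, withDensity_mul _ (by fun_prop) measurable_fiberDensity]
      _ = μ := by
          rw [withDensity_comp_nsmul_rotationSum hμ hmeas ih, withDensity_fiberDensity]

theorem rotationSum_setOf_le_fiberDensityLim_le (hμ : μ.map (fun x ↦ n • x) = μ) {c : ℝ≥0∞}
    (hc : c ≠ 0) (hc' : c ≠ ∞) (N : ℕ) :
    rotationSum (n ^ N) μ {x | c ≤ fiberDensityLim n μ x} ≤ μ Set.univ / c := by
  calc rotationSum (n ^ N) μ {x | c ≤ fiberDensityLim n μ x}
      ≤ rotationSum (n ^ N) μ {x | c ≤ fiberDensityProd n μ N x} :=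
        measure_mono fun x (hx : c ≤ _) ↦ hx.trans (iInf_le _ N)
    _ ≤ (∫⁻ x, fiberDensityProd n μ N x ∂rotationSum (n ^ N) μ) / c :=
        meas_ge_le_lintegral_div (measurable_fiberDensityProd N).aemeasurable hc hc'
    _ = μ Set.univ / c := by
        rw [← setLIntegral_univ, ← withDensity_apply _ .univ, withDensity_fiberDensityProd hμ]

theorem measure_inter_fiberDensityLim_eq_zero {m : ℕ} (hmn : m.Coprime n)
    (hμn : μ.map (fun x ↦ n • x) = μ) (hμm : μ.map (fun x ↦ m • x) = μ) {c : ℝ≥0∞}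
    (hc : c ≠ 0) (hc' : c ≠ ∞) :
    μ ({x | c ≤ fiberDensityLim n μ (m • x)} ∩ {x | fiberDensityLim n μ x = 0}) = 0 := by
  set B : Set UnitAddCircle := {x | c ≤ fiberDensityLim n μ x}
  set Z : Set UnitAddCircle := {x | fiberDensityLim n μ x = 0}
  have hT : Measurable fun x : UnitAddCircle ↦ m • x := measurable_const_smul m
  have hB : MeasurableSet B := measurableSet_le measurable_const measurable_fiberDensityLim
  have hZ : MeasurableSet Z := measurable_fiberDensityLim (measurableSet_singleton 0)
  have hbound (N : ℕ) :
      ∫⁻ x, ((fun x ↦ m • x) ⁻¹' B).indicator 1 x ∂rotationSum (n ^ N) μ ≤ μ Set.univ / c := by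
    rw [lintegral_indicator_one (hT hB), ← Measure.map_apply hT hB,
      map_nsmul_rotationSum_of_coprime (hmn.pow_right N), hμm]
    exact rotationSum_setOf_le_fiberDensityLim_le hμn hc hc' N
  have htendsto : Tendsto (fun _ : ℕ ↦ ∫⁻ x, ((fun x ↦ m • x) ⁻¹' B).indicator 1 x ∂μ.restrict Z)
      atTop (𝓝 0) := by
    refine tendsto_lintegral_zero_of_le_withDensity (φ := fiberDensityProd n μ)
      (ν := fun N ↦ rotationSum (n ^ N) μ) measurable_fiberDensityProd
      (fun N ↦ Measure.restrict_le_self.trans (withDensity_fiberDensityProd hμn N).ge) ?_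
      (fun _ ↦ measurable_one.indicator (hT hB))
      (fun _ ↦ Set.indicator_le_self' fun _ _ ↦ zero_le) (by finiteness) hbound
    filter_upwards [ae_restrict_mem hZ] with x hx
    exact hx ▸ tendsto_fiberDensityProd x
  have hzero := tendsto_nhds_unique tendsto_const_nhds htendsto
  rwa [lintegral_indicator_one (hT hB), Measure.restrict_apply (hT hB)] at hzero

theorem ae_fiberDensityLim_ne_zero_of_nsmul {m : ℕ} (hmn : m.Coprime n)
    (hμn : μ.map (fun x ↦ n • x) = μ) (hμm : μ.map (fun x ↦ m • x) = μ) :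
    ∀ᵐ x ∂μ, fiberDensityLim n μ (m • x) ≠ 0 → fiberDensityLim n μ x ≠ 0 := by
  have hall : ∀ᵐ x ∂μ, ∀ k : ℕ, x ∉ {x | ((k + 1 : ℕ) : ℝ≥0∞)⁻¹ ≤ fiberDensityLim n μ (m • x)} ∩
      {x | fiberDensityLim n μ x = 0} :=
    ae_all_iff.mpr fun k ↦ measure_eq_zero_iff_ae_notMem.mp <|
      measure_inter_fiberDensityLim_eq_zero hmn hμn hμm (by simp) (by simp)
  filter_upwards [hall] with x hx hm h0
  obtain ⟨k, hk⟩ := ENNReal.exists_inv_nat_lt hm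
  refine hx k ⟨(ENNReal.inv_le_inv.mpr ?_).trans hk.le, h0⟩
  exact_mod_cast k.le_succ

theorem ae_fiberDensity_eq_one (hμ : μ.map (fun x ↦ n • x) = μ)
    (hne : ∀ᵐ x ∂μ, fiberDensityLim n μ x ≠ 0) : ∀ᵐ x ∂μ, fiberDensity n μ x = 1 := by
  have hT : MeasurePreserving (fun x : UnitAddCircle ↦ n • x) μ μ :=
    ⟨measurable_const_smul n, hμ⟩
  have hfin : ∫⁻ x, fiberDensityLim n μ x ∂μ ≠ ∞ :=
    ne_top_of_le_ne_top (by simp) (lintegral_mono (g := 1) fiberDensityLim_le_one)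
  have hinv : fiberDensityLim n μ =ᵐ[μ] fun x ↦ fiberDensityLim n μ (n • x) :=
    ae_eq_of_ae_le_of_lintegral_le (.of_forall fiberDensityLim_le_nsmul) hfin
      (measurable_fiberDensityLim.comp hT.measurable).aemeasurable
      (hT.lintegral_comp measurable_fiberDensityLim).le
  filter_upwards [hne, hinv] with x hx hxn
  have hx' : fiberDensityLim n μ x ≠ ∞ := ((fiberDensityLim_le_one x).trans_lt one_lt_top).ne
  have hmul := fiberDensityLim_nsmul_mul (n := n) (μ := μ) x
  rwa [← hxn, ENNReal.mul_eq_left hx hx'] at hmul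

theorem measure_add_toAddCircle_mem_eq_zero {s : Set UnitAddCircle} (hs : MeasurableSet s)
    (h1 : ∀ x ∈ s, fiberDensity n μ x = 1) {j : ZMod n} (hj : j ≠ 0) :
    μ ((· + ZMod.toAddCircle j) ⁻¹' s) = 0 := by
  have hsum : μ s = ∑ j : ZMod n, μ ((· + ZMod.toAddCircle j) ⁻¹' s) := by
    calc μ s = ∫⁻ x in s, fiberDensity n μ x ∂rotationSum n μ := by
          rw [← withDensity_apply _ hs, withDensity_fiberDensity]
      _ = ∫⁻ _ in s, 1 ∂rotationSum n μ := setLIntegral_congr_fun hs h1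
      _ = ∑ j : ZMod n, μ ((· + ZMod.toAddCircle j) ⁻¹' s) := by
          rw [setLIntegral_one, rotationSum, Measure.finsetSum_apply]
          exact Finset.sum_congr rfl fun j _ ↦ Measure.map_apply (by fun_prop) hs
  rw [Fintype.sum_eq_add_sum_compl 0] at hsum
  simp only [map_zero, add_zero, Set.preimage_id'] at hsum
  have hrest := (ENNReal.add_right_inj (measure_ne_top μ s)).mp (hsum.symm.trans (add_zero _).symm)
  exact Finset.sum_eq_zero_iff.mp hrest j (by simpa using hj)

theorem exists_injOn_nsmul (h1 : ∀ᵐ x ∂μ, fiberDensity n μ x = 1) :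
    ∃ s ∈ ae μ, MeasurableSet s ∧ Set.InjOn (fun x : UnitAddCircle ↦ n • x) s := by
  set t : Set UnitAddCircle := {x | fiberDensity n μ x = 1}
  have ht : MeasurableSet t := measurable_fiberDensity (measurableSet_singleton 1)
  have hrot : ∀ᵐ x ∂μ, ∀ j : ZMod n, j ≠ 0 → x + ZMod.toAddCircle j ∉ t :=
    ae_all_iff.mpr fun j ↦ Filter.eventually_imp_distrib_left.mpr fun hj ↦
      measure_eq_zero_iff_ae_notMem.mp (measure_add_toAddCircle_mem_eq_zero ht (fun _ hx ↦ hx) hj)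
  obtain ⟨s, hs, hsm, hst⟩ := (h1.and hrot).exists_measurable_mem
  refine ⟨s, hs, hsm, fun x hx y hy hxy ↦ ?_⟩
  obtain ⟨j, hj⟩ := exists_toAddCircle_eq (n := n) (a := y - x) <| by
    rw [smul_sub, sub_eq_zero]; exact hxy.symm
  by_contra hne
  have hj0 : j ≠ 0 := by
    rintro rfl
    exact hne (sub_eq_zero.mp (by simpa using hj.symm)).symm
  refine (hst x hx).2 j hj0 ?_
  rw [hj, add_sub_cancel]
  exact (hst y hy).1

end FiberDensity

section CommonInvariantSet

variable {α : Type*} [MeasurableSpace α] {μ : Measure α}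

theorem exists_ae_eq_preimage_eq_of_commute {f g : α → α}
    (hf : Measure.QuasiMeasurePreserving f μ μ) (hg : Measure.QuasiMeasurePreserving g μ μ)
    (hfg : Function.Commute f g) {s : Set α} (hs : NullMeasurableSet s μ)
    (hfs : f ⁻¹' s =ᵐ[μ] s) (hgs : g ⁻¹' s =ᵐ[μ] s) :
    ∃ t, MeasurableSet t ∧ t =ᵐ[μ] s ∧ f ⁻¹' t = t ∧ g ⁻¹' t = t := by
  obtain ⟨t, ht, hts, hft⟩ := hf.exists_preimage_eq_of_preimage_ae hs hfs
  have hgt : g ⁻¹' t =ᵐ[μ] t := (hg.preimage_ae_eq hts).trans (hgs.trans hts.symm)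
  refine ⟨limsup (g^[·] ⁻¹' t) atTop, .measurableSet_limsup fun k ↦ hg.measurable.iterate k ht,
    limsup_ae_eq_of_forall_ae_eq _ fun k ↦ (hg.preimage_iterate_ae_eq k hgt).trans hts, ?_, ?_⟩
  · ext x
    have hcomm (k : ℕ) : g^[k] (f x) ∈ t ↔ g^[k] x ∈ t := by
      rw [← (hfg.iterate_right k).eq x, ← Set.mem_preimage, hft]
    simp only [Set.mem_preimage, mem_limsup_iff_frequently_mem, hcomm]
  · simp only [Set.preimage_iterate_eq]
    exact CompleteLatticeHom.apply_limsup_iterate (CompleteLatticeHom.setPreimage g) t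

theorem preimage_ae_eq_of_ae_le_preimage [IsFiniteMeasure μ] {f : α → α}
    (hf : MeasurePreserving f μ μ) {s : Set α} (hs : NullMeasurableSet s μ)
    (hle : s ≤ᵐ[μ] f ⁻¹' s) : f ⁻¹' s =ᵐ[μ] s :=
  (ae_eq_of_ae_subset_of_measure_ge hle (hf.measure_preimage hs).le hs (measure_ne_top μ _)).symm

theorem preimage_ae_eq_of_preimage_ae_le [IsFiniteMeasure μ] {f : α → α}
    (hf : MeasurePreserving f μ μ) {s : Set α} (hs : NullMeasurableSet s μ)
    (hle : f ⁻¹' s ≤ᵐ[μ] s) : f ⁻¹' s =ᵐ[μ] s :=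
  ae_eq_of_ae_subset_of_measure_ge hle (hf.measure_preimage hs).ge
    (hs.preimage hf.quasiMeasurePreserving) (measure_ne_top μ _)

end CommonInvariantSet

section ShannonEntropy

variable {α S Z : Type*} [MeasurableSpace α] [MeasurableSpace S] [MeasurableSingletonClass S]
  {μ : Measure α}

theorem sum_negMulLog_le_neg_sum_mul_log {ι : Type*} [Fintype ι] {p r : ι → ℝ} (hp : ∀ i, 0 ≤ p i)
    (hr : ∀ i, 0 ≤ r i) (hsum : ∑ i, r i ≤ ∑ i, p i) (hac : ∀ i, r i = 0 → p i = 0) :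
    ∑ i, Real.negMulLog (p i) ≤ -∑ i, p i * Real.log (r i) := by
  have hpoint (i : ι) : Real.negMulLog (p i) ≤ -(p i * Real.log (r i)) + (r i - p i) := by
    rcases (hp i).eq_or_lt with h0 | hpos
    · simpa [← h0] using hr i
    · have hrpos : 0 < r i := (hr i).lt_of_ne fun h ↦ hpos.ne' (hac i h.symm)
      have hlog := mul_le_mul_of_nonneg_left
        (Real.log_le_sub_one_of_pos (div_pos hrpos hpos)) hpos.le
      rw [Real.log_div hrpos.ne' hpos.ne', mul_sub, mul_sub, mul_div_cancel₀ _ hpos.ne'] at hlog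
      rw [Real.negMulLog]
      linarith
  calc ∑ i, Real.negMulLog (p i) ≤ ∑ i, (-(p i * Real.log (r i)) + (r i - p i)) :=
        Finset.sum_le_sum fun i _ ↦ hpoint i
    _ ≤ -∑ i, p i * Real.log (r i) := by
        rw [Finset.sum_add_distrib, Finset.sum_sub_distrib, Finset.sum_neg_distrib]
        linarith

theorem integral_comp_le_add_measureReal_mul [Finite S] [IsProbabilityMeasure μ] {X : α → S}
    (hX : Measurable X) {g : S → ℝ} {A : Set S} {a c : ℝ}
    (hg : ∀ s, g s ≤ a + A.indicator (fun _ ↦ c) s) :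
    ∫ x, g (X x) ∂μ ≤ a + μ.real (X ⁻¹' A) * c := by
  have hA : MeasurableSet (X ⁻¹' A) := hX A.toFinite.measurableSet
  have hindicator : Integrable ((X ⁻¹' A).indicator fun _ ↦ c) μ :=
    (integrable_const c).indicator hA
  have hint : Integrable (g ∘ X) μ :=
    (Integrable.of_finite (μ := μ.map X)).comp_measurable hX
  calc ∫ x, g (X x) ∂μ ≤ ∫ x, (a + (X ⁻¹' A).indicator (fun _ ↦ c) x) ∂μ :=
        integral_mono hint ((integrable_const a).add hindicator) fun x ↦ hg (X x)
    _ = a + μ.real (X ⁻¹' A) * c := by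
        simp [integral_add (integrable_const a) hindicator, integral_indicator_const c hA]

variable [Fintype S] [Fintype Z] [MeasurableSpace Z] [MeasurableSingletonClass Z]

/-- The Shannon entropy of a finite-valued random variable `X`. It equals `finPartitionEntropy` of
the partition into the fibres of `X`, as a real number. -/
noncomputable def shannonEntropy (μ : Measure α) (X : α → S) : ℝ :=
  ∑ s, Real.negMulLog (μ.real (X ⁻¹' {s}))

theorem shannonEntropy_comp_measurePreserving {β : Type*} [MeasurableSpace β] {ν : Measure β}
    {T : α → β} (hT : MeasurePreserving T μ ν) {X : β → S} (hX : Measurable X) :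
    shannonEntropy μ (X ∘ T) = shannonEntropy ν X := by
  unfold shannonEntropy
  refine Finset.sum_congr rfl fun s _ ↦ ?_
  rw [Set.preimage_comp,
    hT.measureReal_preimage (hX (measurableSet_singleton s)).nullMeasurableSet]

variable [IsProbabilityMeasure μ]

theorem integral_comp_eq_sum {X : α → S} (hX : Measurable X) (g : S → ℝ) :
    ∫ x, g (X x) ∂μ = ∑ s, μ.real (X ⁻¹' {s}) * g s := by
  have := Measure.isProbabilityMeasure_map (μ := μ) hX.aemeasurable
  rw [← integral_map hX.aemeasurable (measurable_of_finite g).aestronglyMeasurable,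
    integral_fintype .of_finite]
  simp only [map_measureReal_apply hX (measurableSet_singleton _), smul_eq_mul]

theorem shannonEntropy_eq_integral {X : α → S} (hX : Measurable X) :
    shannonEntropy μ X = ∫ x, -Real.log (μ.real (X ⁻¹' {X x})) ∂μ := by
  rw [integral_comp_eq_sum hX fun s ↦ -Real.log (μ.real (X ⁻¹' {s}))]
  exact Finset.sum_congr rfl fun s _ ↦ by rw [Real.negMulLog]; ring

theorem shannonEntropy_comp_le {X : α → Z} (hX : Measurable X) (g : Z → S) :
    shannonEntropy μ (g ∘ X) ≤ shannonEntropy μ X := by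
  rw [shannonEntropy_eq_integral ((measurable_of_finite g).comp hX)]
  refine (integral_comp_eq_sum hX
    fun z ↦ -Real.log (μ.real (g ∘ X ⁻¹' {g z}))).trans_le (Finset.sum_le_sum fun z _ ↦ ?_)
  rcases (measureReal_nonneg (μ := μ) (s := X ⁻¹' {z})).eq_or_lt with h0 | hpos
  · simp [← h0]
  · have hle : μ.real (X ⁻¹' {z}) ≤ μ.real (g ∘ X ⁻¹' {g z}) :=
      measureReal_mono fun x hx ↦ congrArg g hx
    rw [Real.negMulLog, mul_neg, neg_mul]
    gcongr

theorem shannonEntropy_prod_le_add_integral {X : α → S} {Y : α → Z} (hX : Measurable X)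
    (hY : Measurable Y) {w : S → Z → ℝ} (hw : ∀ s z, 0 < w s z) (hsum : ∀ z, ∑ s, w s z = 1) :
    shannonEntropy μ (fun x ↦ (X x, Y x)) ≤
      shannonEntropy μ Y + ∫ x, -Real.log (w (X x) (Y x)) ∂μ := by
  have hXY : Measurable fun x ↦ (X x, Y x) := hX.prodMk hY
  set p : S × Z → ℝ := fun k ↦ μ.real ((fun x ↦ (X x, Y x)) ⁻¹' {k})
  set q : Z → ℝ := fun z ↦ μ.real (Y ⁻¹' {z})
  have hpq (k : S × Z) (hk : q k.2 = 0) : p k = 0 :=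
    measureReal_mono_null (fun x hx ↦ congrArg Prod.snd hx) hk
  have hgibbs : ∑ k, Real.negMulLog (p k) ≤ -∑ k, p k * Real.log (q k.2 * w k.1 k.2) := by
    refine sum_negMulLog_le_neg_sum_mul_log (fun k ↦ measureReal_nonneg)
      (fun k ↦ mul_nonneg measureReal_nonneg (hw _ _).le) (le_of_eq ?_)
      fun k hk ↦ hpq k ((mul_eq_zero_iff_right (hw _ _).ne').mp hk)
    have hp : ∑ k, p k = 1 := by simpa using (integral_comp_eq_sum (μ := μ) hXY fun _ ↦ 1).symm
    have hq : ∑ z, q z = 1 := by simpa using (integral_comp_eq_sum (μ := μ) hY fun _ ↦ 1).symm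
    simp only [Fintype.sum_prod_type_right, ← Finset.mul_sum, hsum, mul_one, hq, hp]
  have hlog (k : S × Z) : p k * Real.log (q k.2 * w k.1 k.2) =
      -(p k * -Real.log (q k.2) + p k * -Real.log (w k.1 k.2)) := by
    rcases eq_or_ne (q k.2) 0 with h0 | hne
    · simp [hpq k h0]
    · rw [Real.log_mul hne (hw _ _).ne']; ring
  calc shannonEntropy μ (fun x ↦ (X x, Y x))
      ≤ ∑ k, p k * -Real.log (q k.2) + ∑ k, p k * -Real.log (w k.1 k.2) := by
        simp only [hlog, Finset.sum_neg_distrib, neg_neg, Finset.sum_add_distrib] at hgibbs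
        exact hgibbs
    _ = shannonEntropy μ Y + ∫ x, -Real.log (w (X x) (Y x)) ∂μ := by
        rw [shannonEntropy_eq_integral hY, ← integral_comp_eq_sum hXY fun k ↦ -Real.log (q k.2),
          ← integral_comp_eq_sum hXY fun k ↦ -Real.log (w k.1 k.2)]

/-- Fano's inequality, by Gibbs' inequality against the mixture of the Dirac mass at `f (Y x)` and
the uniform distribution, with weights `1 - δ` and `δ`. -/
theorem shannonEntropy_prod_le {X : α → S} {Y : α → Z} (hX : Measurable X) (hY : Measurable Y)
    (f : Z → S) {δ : ℝ} (hδ : 0 < δ) (hδ1 : δ < 1) :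
    shannonEntropy μ (fun x ↦ (X x, Y x)) ≤ shannonEntropy μ Y - Real.log (1 - δ) +
      μ.real {x | X x ≠ f (Y x)} * (Real.log (Fintype.card S) - Real.log δ) := by
  classical
  have : Nonempty S := (nonempty_of_isProbabilityMeasure μ).map X
  have hcard : (0 : ℝ) < Fintype.card S := by exact_mod_cast Fintype.card_pos
  set w : S → Z → ℝ := fun s z ↦ (if s = f z then 1 - δ else 0) + δ / Fintype.card S
  set C : ℝ := Real.log (Fintype.card S) - Real.log δ
  have hδ1' : 0 < 1 - δ := by linarith
  have hw (s : S) (z : Z) : 0 < w s z := by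
    have := div_pos hδ hcard
    simp only [w]; split_ifs <;> linarith
  have hsum (z : Z) : ∑ s, w s z = 1 := by
    simp only [w, Finset.sum_add_distrib, Finset.sum_ite_eq', Finset.mem_univ, if_true,
      Finset.sum_const, Finset.card_univ, nsmul_eq_mul, mul_div_cancel₀ _ hcard.ne']
    ring
  have hlog (k : S × Z) : -Real.log (w k.1 k.2) ≤
      -Real.log (1 - δ) + {k : S × Z | k.1 ≠ f k.2}.indicator (fun _ ↦ C) k := by
    by_cases hk : k.1 = f k.2
    · have hle : 1 - δ ≤ w k.1 k.2 := by
        simpa [w, hk] using (div_pos hδ hcard).le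
      simpa [hk] using Real.log_le_log hδ1' hle
    · have hnonpos : Real.log (1 - δ) ≤ 0 := Real.log_nonpos hδ1'.le (by linarith)
      simpa [hk, w, C, Real.log_div hδ.ne' hcard.ne'] using hnonpos
  have hint := integral_comp_le_add_measureReal_mul (μ := μ) (hX.prodMk hY) hlog
  rw [Set.preimage_ofPred_eq] at hint
  linarith [shannonEntropy_prod_le_add_integral (μ := μ) hX hY hw hsum]

end ShannonEntropy

section Itinerary

variable {α S Z : Type*} {T : α → α} {X : α → S}

/-- The `X`-labels of the first `N` points of the `T`-orbit of `x`. -/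
def itinerary (T : α → α) (X : α → S) (N : ℕ) (x : α) (i : Fin N) : S :=
  X (T^[i] x)

theorem itinerary_succ (N : ℕ) (x : α) :
    itinerary T X (N + 1) x = Fin.cons (X x) (itinerary T X N (T x)) :=
  funext fun i ↦ Fin.cases rfl (fun _ ↦ rfl) i

theorem isSetAlgebra_preimage_itinerary (T : α → α) (X : α → S) :
    IsSetAlgebra {s | ∃ (N : ℕ) (A : Set (Fin N → S)), itinerary T X N ⁻¹' A = s} where
  empty_mem := ⟨0, ∅, rfl⟩
  compl_mem := by
    rintro _ ⟨N, A, rfl⟩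
    exact ⟨N, Aᶜ, rfl⟩
  union_mem := by
    rintro _ _ ⟨M, A, rfl⟩ ⟨N, B, rfl⟩
    exact ⟨max M N, (· ∘ Fin.castLE (le_max_left M N)) ⁻¹' A ∪
      (· ∘ Fin.castLE (le_max_right M N)) ⁻¹' B, rfl⟩

variable [MeasurableSpace α] [MeasurableSpace S]

theorem measurable_itinerary (hT : Measurable T) (hX : Measurable X) (N : ℕ) :
    Measurable (itinerary T X N) :=
  measurable_pi_lambda _ fun i ↦ hX.comp (hT.iterate i)

theorem exists_ae_eq_comp_of_injOn [StandardBorelSpace α] [Nonempty S]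
    {μ : Measure α}
    (hT : Measurable T) {s : Set α} (hs : MeasurableSet s) (hsμ : s ∈ ae μ) (hinj : s.InjOn T)
    (hX : Measurable X) : ∃ Y : α → S, Measurable Y ∧ X =ᵐ[μ] Y ∘ T := by
  have := hs.standardBorel
  have hemb : MeasurableEmbedding (s.domRestrict T) :=
    Measurable.measurableEmbedding (hT.comp measurable_subtype_coe) hinj.injective
  obtain ⟨Y, hY, hYX⟩ := hemb.exists_measurable_extend (hX.comp measurable_subtype_coe)
    fun _ ↦ inferInstance
  refine ⟨Y, hY, ?_⟩
  filter_upwards [hsμ] with x hx using (congrFun hYX ⟨x, hx⟩).symm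

section Finite

variable [Finite S] [MeasurableSingletonClass S]

theorem generateFrom_preimage_itinerary [StandardBorelSpace α] (hT : Measurable T)
    (hX : Measurable X) (hinj : Function.Injective fun x (k : ℕ) ↦ X (T^[k] x)) :
    ‹MeasurableSpace α› = MeasurableSpace.generateFrom
      {s | ∃ (N : ℕ) (A : Set (Fin N → S)), itinerary T X N ⁻¹' A = s} := by
  have hcoding : MeasurableEmbedding fun x (k : ℕ) ↦ X (T^[k] x) :=
    Measurable.measurableEmbedding
      (measurable_pi_lambda _ fun k ↦ hX.comp (hT.iterate k)) hinj
  refine le_antisymm ?_ (MeasurableSpace.generateFrom_le ?_)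
  · rw [← hcoding.comap_eq, MeasurableSpace.pi, MeasurableSpace.comap_iSup]
    refine iSup_le fun k ↦ ?_
    rw [MeasurableSpace.comap_comp]
    rintro _ ⟨B, -, rfl⟩
    exact MeasurableSpace.measurableSet_generateFrom
      ⟨k + 1, (fun w ↦ w (Fin.last k)) ⁻¹' B, rfl⟩
  · rintro _ ⟨N, A, rfl⟩
    exact measurable_itinerary hT hX N A.toFinite.measurableSet

theorem exists_measureReal_ne_itinerary_lt [StandardBorelSpace α] {μ : Measure α}
    [IsFiniteMeasure μ] (hT : Measurable T) (hX : Measurable X)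
    (hinj : Function.Injective fun x (k : ℕ) ↦ X (T^[k] x)) [Finite Z] [Nonempty Z]
    [MeasurableSpace Z] [MeasurableSingletonClass Z] {Y : α → Z} (hY : Measurable Y) {ε : ℝ}
    (hε : 0 < ε) :
    ∃ K, ∀ N ≥ K, ∃ F : (Fin N → S) → Z, μ.real {x | Y x ≠ F (itinerary T X N x)} < ε := by
  cases nonempty_fintype Z
  have hcard : (0 : ℝ) < Fintype.card Z := by exact_mod_cast Fintype.card_pos
  have hdense := Measure.MeasureDense.of_generateFrom_isSetAlgebra_finite (μ := μ)
    (isSetAlgebra_preimage_itinerary T X) (generateFrom_preimage_itinerary hT hX hinj)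
  have happrox (z : Z) := hdense.approx (Y ⁻¹' {z}) (hY (measurableSet_singleton z))
    (measure_ne_top μ _) (ε / Fintype.card Z) (div_pos hε hcard)
  choose t ht hlt using happrox
  choose M A hA using ht
  refine ⟨Finset.univ.sup M, fun N hN ↦ ?_⟩
  have hMN (z : Z) : M z ≤ N := (Finset.le_sup (Finset.mem_univ z)).trans hN
  refine ⟨fun w ↦ Classical.epsilon fun z ↦ w ∘ Fin.castLE (hMN z) ∈ A z, ?_⟩
  calc μ.real _ ≤ μ.real (⋃ z, symmDiff (Y ⁻¹' {z}) (t z)) := measureReal_mono fun x hx ↦ ?_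
    _ ≤ ∑ z, μ.real (symmDiff (Y ⁻¹' {z}) (t z)) := measureReal_iUnion_fintype_le _
    _ < ∑ _z : Z, ε / Fintype.card Z := Finset.sum_lt_sum_of_nonempty Finset.univ_nonempty
        fun z _ ↦ ENNReal.toReal_lt_of_lt_ofReal (hlt z)
    _ = ε := by simp [mul_div_cancel₀ _ hcard.ne']
  by_contra hagree
  rw [Set.mem_iUnion, not_exists] at hagree
  have hiff (z : Z) : Y x = z ↔ itinerary T X (M z) x ∈ A z := by
    rw [← Set.mem_preimage, hA]
    simpa [Set.mem_symmDiff, iff_def] using hagree z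
  exact hx ((hiff _).mpr (Classical.epsilon_spec
    (p := fun z ↦ itinerary T X (M z) x ∈ A z) ⟨Y x, (hiff _).mp rfl⟩))

end Finite

section Fintype

variable [Fintype S] [MeasurableSingletonClass S] {μ : Measure α} [IsProbabilityMeasure μ]

theorem shannonEntropy_itinerary_mono (hT : Measurable T) (hX : Measurable X) :
    Monotone fun N ↦ shannonEntropy μ (itinerary T X N) := fun _ N h ↦
  shannonEntropy_comp_le (measurable_itinerary hT hX N) (· ∘ Fin.castLE h)

theorem shannonEntropy_itinerary_comp_le [Fintype Z] [MeasurableSpace Z]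
    [MeasurableSingletonClass Z] (hT : Measurable T) (hX : Measurable X) (g : S → Z) (N : ℕ) :
    shannonEntropy μ (itinerary T (g ∘ X) N) ≤ shannonEntropy μ (itinerary T X N) :=
  shannonEntropy_comp_le (measurable_itinerary hT hX N) (g ∘ ·)

theorem shannonEntropy_itinerary_succ_le (hT : MeasurePreserving T μ μ) (hX : Measurable X) (N : ℕ)
    (F : (Fin N → S) → S) {δ : ℝ} (hδ : 0 < δ) (hδ1 : δ < 1) :
    shannonEntropy μ (itinerary T X (N + 1)) ≤ shannonEntropy μ (itinerary T X N) -
      Real.log (1 - δ) + μ.real {x | X x ≠ F (itinerary T X N (T x))} *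
        (Real.log (Fintype.card S) - Real.log δ) := by
  have hitin := measurable_itinerary hT.measurable hX N
  calc shannonEntropy μ (itinerary T X (N + 1))
      = shannonEntropy μ ((fun k : S × (Fin N → S) ↦ (Fin.cons k.1 k.2 : Fin (N + 1) → S)) ∘
          fun x ↦ (X x, itinerary T X N (T x))) :=
        congrArg (shannonEntropy μ) (funext (itinerary_succ N))
    _ ≤ shannonEntropy μ fun x ↦ (X x, itinerary T X N (T x)) :=
        shannonEntropy_comp_le (hX.prodMk (hitin.comp hT.measurable)) _
    _ ≤ _ := by
        rw [← shannonEntropy_comp_measurePreserving hT hitin]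
        exact shannonEntropy_prod_le hX (hitin.comp hT.measurable) F hδ hδ1

theorem exists_shannonEntropy_itinerary_succ_le [StandardBorelSpace α]
    (hT : MeasurePreserving T μ μ) (hX : Measurable X)
    (hinj : Function.Injective fun x (k : ℕ) ↦ X (T^[k] x)) {s : Set α} (hs : MeasurableSet s)
    (hsμ : s ∈ ae μ) (hTs : s.InjOn T) {η : ℝ} (hη : 0 < η) :
    ∃ K, ∀ N ≥ K,
      shannonEntropy μ (itinerary T X (N + 1)) ≤ shannonEntropy μ (itinerary T X N) + η := by
  have : Nonempty S := (nonempty_of_isProbabilityMeasure μ).map X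
  obtain ⟨Y, hY, hXY⟩ := exists_ae_eq_comp_of_injOn hT.measurable hs hsμ hTs hX
  set δ : ℝ := 1 - Real.exp (-(η / 2))
  have hδ : 0 < δ := sub_pos.mpr (Real.exp_lt_one_iff.mpr (by linarith))
  have hδ1 : δ < 1 := sub_lt_self _ (Real.exp_pos _)
  have hlog : Real.log (1 - δ) = -(η / 2) := by simp [δ]
  set C : ℝ := Real.log (Fintype.card S) - Real.log δ
  obtain ⟨K, hK⟩ := exists_measureReal_ne_itinerary_lt (μ := μ) hT.measurable hX hinj hY
    (ε := η / 2 / (|C| + 1)) (by positivity)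
  refine ⟨K, fun N hN ↦ ?_⟩
  obtain ⟨F, hF⟩ := hK N hN
  have hitin := measurable_itinerary hT.measurable hX N
  have herror : μ.real {x | X x ≠ F (itinerary T X N (T x))} =
      μ.real {x | Y x ≠ F (itinerary T X N x)} := by
    have hmeas : MeasurableSet {x | Y x ≠ F (itinerary T X N x)} :=
      (measurableSet_eq_fun hY ((measurable_of_finite F).comp hitin)).compl
    rw [← hT.measureReal_preimage hmeas.nullMeasurableSet]
    refine measureReal_congr ?_
    filter_upwards [hXY] with x hx
    exact congrArg (fun c ↦ c ≠ F (itinerary T X N (T x))) hx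
  have hC : μ.real {x | X x ≠ F (itinerary T X N (T x))} * C ≤ η / 2 := by
    rw [herror]
    rw [lt_div_iff₀ (by positivity)] at hF
    refine le_trans ?_ hF.le
    gcongr
    linarith [le_abs_self C]
  linarith [shannonEntropy_itinerary_succ_le hT hX N F hδ hδ1]

theorem exists_shannonEntropy_itinerary_le [StandardBorelSpace α]
    (hT : MeasurePreserving T μ μ) (hX : Measurable X)
    (hinj : Function.Injective fun x (k : ℕ) ↦ X (T^[k] x)) {s : Set α} (hs : MeasurableSet s)
    (hsμ : s ∈ ae μ) (hTs : s.InjOn T) {η : ℝ} (hη : 0 < η) :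
    ∃ C, ∀ N, shannonEntropy μ (itinerary T X N) ≤ C + N * η := by
  obtain ⟨K, hK⟩ := exists_shannonEntropy_itinerary_succ_le hT hX hinj hs hsμ hTs hη
  refine ⟨shannonEntropy μ (itinerary T X K), fun N ↦ ?_⟩
  rcases le_total N K with h | h
  · have hmono := shannonEntropy_itinerary_mono (μ := μ) hT.measurable hX h
    have : 0 ≤ N * η := by positivity
    exact hmono.trans (by simpa)
  · induction N, h using Nat.le_induction with
    | base => simpa using by positivity
    | succ N hN ih =>
      push_cast
      linarith [hK N hN]

theorem finPartitionEntropy_refinedPartition_le {m : ℕ} {P : Fin m → Set α}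
    (hP : Pairwise (Function.onFun Disjoint P)) (N : ℕ) :
    finPartitionEntropy μ (refinedPartition T P N) ≤
      ENNReal.ofReal (shannonEntropy μ (itinerary T (fun x i ↦ x ∈ P i) N)) := by
  set code : (Fin N → Fin m) → Fin N → Fin m → Prop := fun f i j ↦ j = f i
  have hcode : Function.Injective code := fun f g h ↦
    funext fun i ↦ (congrFun (congrFun h i) (f i)).mp rfl
  have hcell (f : Fin N → Fin m) :
      refinedPartition T P N f = itinerary T (fun x i ↦ x ∈ P i) N ⁻¹' {code f} := by
    ext x
    simp only [refinedPartition, Set.mem_iInter, Set.mem_preimage, Set.mem_singleton_iff, code,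
      funext_iff, itinerary, eq_iff_iff]
    refine forall_congr' fun i ↦ ⟨fun hx j ↦ ⟨fun hj ↦ ?_, fun h ↦ h ▸ hx⟩, fun h ↦ (h _).mpr rfl⟩
    exact hP.eq (Set.not_disjoint_iff.mpr ⟨_, hj, hx⟩)
  refine ENNReal.ofReal_le_ofReal ?_
  set p : (Fin N → Fin m → Prop) → ℝ := fun w ↦ μ.real (itinerary T (fun x i ↦ x ∈ P i) N ⁻¹' {w})
  calc ∑ f, Real.negMulLog (μ (refinedPartition T P N f)).toReal
      = ∑ w ∈ Finset.univ.map ⟨code, hcode⟩, Real.negMulLog (p w) := by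
        rw [Finset.sum_map]
        exact Finset.sum_congr rfl fun f _ ↦ by rw [hcell f]; rfl
    _ ≤ ∑ w, Real.negMulLog (p w) := Finset.sum_le_univ_sum_of_nonneg
        fun _ ↦ Real.negMulLog_nonneg measureReal_nonneg measureReal_le_one

theorem iInf_div_add_one_le {u : ℕ → ℝ≥0∞} {C η : ℝ}
    (hu : ∀ N : ℕ, u N ≤ ENNReal.ofReal (C + N * η)) :
    ⨅ n : ℕ, u (n + 1) / (n + 1) ≤ ENNReal.ofReal η := by
  have hlim : Tendsto (fun n : ℕ ↦ ENNReal.ofReal (C / (n + 1) + η)) atTop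
      (𝓝 (ENNReal.ofReal η)) := by
    have := ((tendsto_const_div_atTop_nhds_zero_nat C).comp (tendsto_add_atTop_nat 1)).add_const η
    simpa using ENNReal.tendsto_ofReal this
  refine ge_of_tendsto' hlim fun n ↦ (iInf_le _ n).trans ?_
  have hpos : (0 : ℝ) < n + 1 := by positivity
  calc u (n + 1) / (n + 1) ≤ ENNReal.ofReal (C + (n + 1 : ℕ) * η) / ENNReal.ofReal (n + 1) := by
        gcongr
        · exact hu _
        · exact_mod_cast (ENNReal.ofReal_natCast (n + 1)).le
    _ = ENNReal.ofReal (C / (n + 1) + η) := by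
        rw [← ENNReal.ofReal_div_of_pos hpos]
        push_cast
        rw [add_div, mul_div_cancel_left₀ _ hpos.ne']

end Fintype

theorem ksEntropy_eq_zero_of_injOn [StandardBorelSpace α] [Finite S] [MeasurableSingletonClass S]
    {μ : Measure α} [IsProbabilityMeasure μ] (hT : MeasurePreserving T μ μ)
    (hX : Measurable X) (hinj : Function.Injective fun x (k : ℕ) ↦ X (T^[k] x)) {s : Set α}
    (hs : MeasurableSet s) (hsμ : s ∈ ae μ) (hTs : s.InjOn T) : ksEntropy T μ = 0 := by
  cases nonempty_fintype S
  simp only [ksEntropy, ENNReal.iSup_eq_zero]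
  rintro m P ⟨hPmeas, hPdisj, -⟩
  set L : α → Fin m → Prop := fun x i ↦ x ∈ P i
  have hL : Measurable L := measurable_pi_lambda _ fun i ↦ (hPmeas i).mem
  have hLX : Measurable fun x ↦ (L x, X x) := hL.prodMk hX
  have hLXinj : Function.Injective fun x (k : ℕ) ↦ (L (T^[k] x), X (T^[k] x)) := fun x y h ↦
    hinj (funext fun k ↦ congrArg Prod.snd (congrFun h k))
  refine le_bot_iff.mp (ENNReal.le_of_forall_pos_le_add fun η hη _ ↦ ?_)
  obtain ⟨C, hC⟩ := exists_shannonEntropy_itinerary_le hT hLX hLXinj hs hsμ hTs hη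
  rw [bot_eq_zero, zero_add, ← ENNReal.ofReal_coe_nnreal]
  exact iInf_div_add_one_le fun N ↦ (finPartitionEntropy_refinedPartition_le hPdisj N).trans <|
    ENNReal.ofReal_le_ofReal <|
      (shannonEntropy_itinerary_comp_le hT.measurable hLX Prod.fst N).trans (hC N)

end Itinerary

section Digit

variable {n : ℕ} [NeZero n]

theorem floor_mul_equivIco_lt (x : UnitAddCircle) :
    ⌊n * (AddCircle.equivIco (1 : ℝ) 0 x : ℝ)⌋₊ < n := by
  have hn : (0 : ℝ) < n := by exact_mod_cast Nat.pos_of_neZero n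
  obtain ⟨h0, h1⟩ := (AddCircle.equivIco (1 : ℝ) 0 x).2
  rw [Nat.floor_lt (by positivity)]
  nlinarith

/-- The first digit of the expansion in base `n` of the representative of `x` in `[0, 1)`. -/
noncomputable def digit (n : ℕ) [NeZero n] (x : UnitAddCircle) : Fin n :=
  ⟨⌊n * (AddCircle.equivIco (1 : ℝ) 0 x : ℝ)⌋₊, floor_mul_equivIco_lt x⟩

theorem measurable_digit : Measurable (digit n) :=
  measurable_to_countable' fun i ↦ by
    have hrep : Measurable fun x : UnitAddCircle ↦ (AddCircle.equivIco (1 : ℝ) 0 x : ℝ) :=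
      measurable_subtype_coe.comp (AddCircle.measurableEquivIco (1 : ℝ) 0).measurable
    simpa [digit, Set.preimage, Fin.ext_iff] using
      Nat.measurable_floor.comp (hrep.const_mul (n : ℝ)) (measurableSet_singleton (i : ℕ))

theorem equivIco_nsmul (x : UnitAddCircle) : (AddCircle.equivIco (1 : ℝ) 0 (n • x) : ℝ) =
    n * (AddCircle.equivIco (1 : ℝ) 0 x : ℝ) - digit n x := by
  set r : ℝ := (AddCircle.equivIco (1 : ℝ) 0 x : ℝ)
  have hx : n • x = ((n * r : ℝ) : UnitAddCircle) := by
    rw [← nsmul_eq_mul, AddCircle.coe_nsmul, AddCircle.coe_equivIco]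
  have hr : 0 ≤ n * r := mul_nonneg n.cast_nonneg (AddCircle.equivIco (1 : ℝ) 0 x).2.1
  rw [hx, AddCircle.coe_equivIco_mk_apply, div_one, mul_one, ← Int.self_sub_floor, digit,
    natCast_floor_eq_intCast_floor hr]

theorem injective_digit_iterate_nsmul (hn : 2 ≤ n) :
    Function.Injective fun (x : UnitAddCircle) (k : ℕ) ↦ digit n ((n • ·)^[k] x) := by
  intro x y h
  set r : UnitAddCircle → ℝ := fun z ↦ AddCircle.equivIco (1 : ℝ) 0 z
  have hr (k : ℕ) : n ^ k * (r x - r y) = r ((n • ·)^[k] x) - r ((n • ·)^[k] y) := by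
    induction k with
    | zero => simp
    | succ k ih =>
      have hk : digit n ((n • ·)^[k] x) = digit n ((n • ·)^[k] y) := congrFun h k
      simp only [Function.iterate_succ_apply', r, equivIco_nsmul, hk] at ih ⊢
      rw [pow_succ', mul_assoc, ih]
      ring
  have hle (k : ℕ) : |r x - r y| ≤ (n : ℝ)⁻¹ ^ k := by
    have hdiff : |r ((n • ·)^[k] x) - r ((n • ·)^[k] y)| ≤ 1 := by
      obtain ⟨hx0, hx1⟩ := (AddCircle.equivIco (1 : ℝ) 0 ((n • ·)^[k] x)).2
      obtain ⟨hy0, hy1⟩ := (AddCircle.equivIco (1 : ℝ) 0 ((n • ·)^[k] y)).2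
      rw [abs_le]
      constructor <;> linarith
    rw [← hr, abs_mul, abs_of_nonneg (by positivity)] at hdiff
    rwa [inv_pow, ← one_div, le_div_iff₀' (by positivity)]
  have hzero : |r x - r y| ≤ 0 := ge_of_tendsto' (tendsto_pow_atTop_nhds_zero_of_lt_one
    (by positivity) (inv_lt_one_of_one_lt₀ (by exact_mod_cast hn))) hle
  exact (AddCircle.equivIco (1 : ℝ) 0).injective
    (Subtype.ext (sub_eq_zero.mp (abs_nonpos_iff.mp hzero)))

end Digit

theorem ae_fiberDensityLim_eq_zero_or_ne_zero {m n : ℕ} [NeZero n] (hmn : m.Coprime n)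
    {μ : Measure UnitAddCircle} [IsProbabilityMeasure μ]
    (hμn : MeasurePreserving (fun x ↦ n • x) μ μ) (hμm : MeasurePreserving (fun x ↦ m • x) μ μ)
    (herg : ∀ A : Set UnitAddCircle, MeasurableSet A → (fun x ↦ n • x) ⁻¹' A = A →
      (fun x ↦ m • x) ⁻¹' A = A → μ A = 0 ∨ μ A = 1) :
    (∀ᵐ x ∂μ, fiberDensityLim n μ x = 0) ∨ ∀ᵐ x ∂μ, fiberDensityLim n μ x ≠ 0 := by
  set s : Set UnitAddCircle := {x | fiberDensityLim n μ x ≠ 0}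
  have hs : NullMeasurableSet s μ :=
    (measurable_fiberDensityLim (measurableSet_singleton 0).compl).nullMeasurableSet
  have hsn : (fun x ↦ n • x) ⁻¹' s =ᵐ[μ] s := preimage_ae_eq_of_ae_le_preimage hμn hs <|
    .of_forall fun x hx ↦ ((pos_iff_ne_zero.mpr hx).trans_le (fiberDensityLim_le_nsmul x)).ne'
  have hsm : (fun x ↦ m • x) ⁻¹' s =ᵐ[μ] s := preimage_ae_eq_of_preimage_ae_le hμm hs <|
    ae_fiberDensityLim_ne_zero_of_nsmul hmn hμn.map_eq hμm.map_eq
  obtain ⟨A, hA, hAs, hAn, hAm⟩ := exists_ae_eq_preimage_eq_of_commute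
    hμn.quasiMeasurePreserving hμm.quasiMeasurePreserving (fun x ↦ smul_comm n m x) hs hsn hsm
  refine (herg A hA hAn hAm).imp (fun h ↦ ?_) fun h ↦ ?_
  · simpa [s] using measure_eq_zero_iff_ae_notMem.mp ((measure_congr hAs).symm.trans h)
  · exact (prob_compl_eq_zero_iff₀ hs).mpr ((measure_congr hAs).symm.trans h)

/-- Rudolph: Let `m` and `n` be relatively prime integers, each at least 2,
and let `μ` be a Borel probability measure on `𝕋` invariant and ergodic under the
multiplicative semigroup generated by `×n` and `×m`.  If `h_μ(×n) > 0` then `μ` is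
Lebesgue measure on `𝕋`. -/
theorem rudolph_times_n_times_m_positive_entropy
    (m n : ℕ) (hm : 2 ≤ m) (hn : 2 ≤ n) (hmn : Nat.Coprime m n)
    (μ : Measure UnitAddCircle) [IsProbabilityMeasure μ]
    (hinvn : Measure.map (fun x : UnitAddCircle => n • x) μ = μ)
    (hinvm : Measure.map (fun x : UnitAddCircle => m • x) μ = μ)
    (herg : ∀ A : Set UnitAddCircle, MeasurableSet A →
      (fun x : UnitAddCircle => n • x) ⁻¹' A = A →
      (fun x : UnitAddCircle => m • x) ⁻¹' A = A → μ A = 0 ∨ μ A = 1)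
    (hent : 0 < ksEntropy (fun x : UnitAddCircle => n • x) μ) :
    μ = volume := by
  have : NeZero n := ⟨by omega⟩
  have hμn : MeasurePreserving (fun x : UnitAddCircle ↦ n • x) μ μ :=
    ⟨(continuous_const_smul n).measurable, hinvn⟩
  have hμm : MeasurePreserving (fun x : UnitAddCircle ↦ m • x) μ μ :=
    ⟨(continuous_const_smul m).measurable, hinvm⟩
  rcases ae_fiberDensityLim_eq_zero_or_ne_zero hmn hμn hμm herg with hzero | hne
  · refine eq_volume_of_tendsto_density hm hmn hinvm measurable_fiberDensityProd
      (fun N ↦ (withDensity_fiberDensityProd hinvn N).ge) ?_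
    filter_upwards [hzero] with x hx using hx ▸ tendsto_fiberDensityProd x
  · obtain ⟨s, hsμ, hs, hinj⟩ := exists_injOn_nsmul (ae_fiberDensity_eq_one hinvn hne)
    exact absurd (ksEntropy_eq_zero_of_injOn hμn measurable_digit (injective_digit_iterate_nsmul hn)
      hs hsμ hinj) hent.ne'
end
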